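/- arXiv:1303.0656 — 3 statements merged into one kernel-verified Lean document; each statement's English description precedes it below -/
import Mathlib

section
/- Let μ be a finite complex Borel measure on [0,1) with t·|μ|([0,1−t)) bounded as t → 0⁺, and suppose the derivation D_μ f = (Xf)*μ on L¹[0,1) is weakly compact. Then μ is absolutely continuous with respect to Lebesgue measure and t·|μ|([0,1−t)) → 0 as t → 0⁺. -/
open MeasureTheory Set Filter Topology

noncomputable section

/-- Integral of a complex-valued function against a complex (Borel) measure,
defined via the Jordan decompositions of the real and imaginary parts. -/
def cInt {X : Type} [MeasurableSpace X] (μ : ComplexMeasure X) (f : X → ℂ) : ℂ :=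
  ((∫ x, f x ∂μ.re.toJordanDecomposition.posPart) -
      ∫ x, f x ∂μ.re.toJordanDecomposition.negPart) +
    Complex.I * ((∫ x, f x ∂μ.im.toJordanDecomposition.posPart) -
      ∫ x, f x ∂μ.im.toJordanDecomposition.negPart)

/-- A (positive) measure playing the role of the total variation `|μ|` of a complex
measure `μ` (it is equivalent to the classical total variation: `|μ| ≤ cTV μ ≤ 2|μ|`). -/
def cTV {X : Type} [MeasurableSpace X] (μ : ComplexMeasure X) : Measure X :=
  μ.re.totalVariation + μ.im.totalVariation

/-- `μ` is concentrated on the set `A`, i.e. `μ` is a measure "on `A`". -/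
def ConcOn {X : Type} [MeasurableSpace X] (μ : ComplexMeasure X) (A : Set X) : Prop :=
  ∀ E : Set X, MeasurableSet E → E ⊆ Aᶜ → μ E = 0

/-- `ρ` is the convolution `(Xν) * μ` of the complex measures `ν, μ` on `[0,1)`,
characterized by `ρ E = ∫∫ 1_E (t+s) t dμ(s) dν(t)` for Borel `E ⊆ [0,1)`. -/
def IsXConv (μ ν ρ : ComplexMeasure ℝ) : Prop :=
  ConcOn ρ (Ico 0 1) ∧
    ∀ E : Set ℝ, MeasurableSet E → E ⊆ Ico (0 : ℝ) 1 →
      ρ E = cInt ν fun t => (t : ℂ) * cInt μ fun s => E.indicator (1 : ℝ → ℂ) (t + s)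

/-- The Volterra algebra `L¹[0,1)` as a Banach space. -/
abbrev Volterra := Lp ℂ 1 (volume.restrict (Ico (0 : ℝ) 1))

/-- `D` is the derivation `D_μ f = (Xf) * μ` on `L¹[0,1)`, characterized weakly:
`∫ φ(t) (D f)(t) dt = ∫ ∫_{[0,1-s)} φ(t+s) t f(t) dt dμ(s)` for all `φ ∈ C₀[0,1)`. -/
def IsDmu (μ : ComplexMeasure ℝ) (D : Volterra →L[ℂ] Volterra) : Prop :=
  ∀ f : Volterra, ∀ φ : ℝ → ℂ, ContinuousOn φ (Icc 0 1) → φ 1 = 0 →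
    (∫ t, φ t * (D f : ℝ → ℂ) t ∂(volume.restrict (Ico (0 : ℝ) 1))) =
      cInt μ fun s =>
        ∫ t, φ (t + s) * ((t : ℂ) * (f : ℝ → ℂ) t)
          ∂(volume.restrict (Ico (0 : ℝ) (1 - s)))

lemma jordan_pos_apply_zero (s : SignedMeasure ℝ) (E : Set ℝ) (hE : MeasurableSet E)
    (h : ∀ F : Set ℝ, MeasurableSet F → F ⊆ E → s F = 0) :
    s.toJordanDecomposition.posPart E = 0 ∧ s.toJordanDecomposition.negPart E = 0 := by
  obtain ⟨i, hi₁, hi₂, hi₃, hp, hn⟩ := s.toJordanDecomposition_spec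
  constructor
  · rw [hp, SignedMeasure.toMeasureOfZeroLE_apply _ hi₂ hi₁ hE]
    have := h (i ∩ E) (hi₁.inter hE) inter_subset_right
    simp [this]
  · rw [hn, SignedMeasure.toMeasureOfLEZero_apply _ hi₃ hi₁.compl hE]
    have := h (iᶜ ∩ E) (hi₁.compl.inter hE) inter_subset_right
    simp [this]

lemma signed_zero_of_compact (s : SignedMeasure ℝ) (E : Set ℝ) (hE : MeasurableSet E)
    (h : ∀ K : Set ℝ, IsCompact K → K ⊆ E → s K = 0) : s E = 0 := by
  obtain ⟨i, hi₁, hi₂, hi₃, hp, hn⟩ := s.toJordanDecomposition_spec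
  have hP : s.toJordanDecomposition.posPart (E ∩ i) = 0 := by
    rw [(hE.inter hi₁).measure_eq_iSup_isCompact]
    simp only [ENNReal.iSup_eq_zero]
    intro K hK hKc
    rw [hp, SignedMeasure.toMeasureOfZeroLE_apply _ hi₂ hi₁ hKc.measurableSet]
    have : i ∩ K = K := inter_eq_right.2 (hK.trans inter_subset_right)
    simp [this, h K hKc (hK.trans inter_subset_left)]
  have hN : s.toJordanDecomposition.negPart (E ∩ iᶜ) = 0 := by
    rw [(hE.inter hi₁.compl).measure_eq_iSup_isCompact]
    simp only [ENNReal.iSup_eq_zero]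
    intro K hK hKc
    rw [hn, SignedMeasure.toMeasureOfLEZero_apply _ hi₃ hi₁.compl hKc.measurableSet]
    have : iᶜ ∩ K = K := inter_eq_right.2 (hK.trans inter_subset_right)
    simp [this, h K hKc (hK.trans inter_subset_left)]
  have h1 : s (E ∩ i) = 0 := by
    rw [hp, SignedMeasure.toMeasureOfZeroLE_apply _ hi₂ hi₁ (hE.inter hi₁)] at hP
    have e : i ∩ (E ∩ i) = E ∩ i := inter_eq_right.2 inter_subset_right
    have := congrArg (fun x : ENNReal => x.toReal) hP
    simpa [e] using this
  have h2 : s (E ∩ iᶜ) = 0 := by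
    rw [hn, SignedMeasure.toMeasureOfLEZero_apply _ hi₃ hi₁.compl (hE.inter hi₁.compl)] at hN
    have e : iᶜ ∩ (E ∩ iᶜ) = E ∩ iᶜ := inter_eq_right.2 inter_subset_right
    have := congrArg (fun x : ENNReal => x.toReal) hN
    simpa [e] using this
  have h3 := VectorMeasure.of_union (v := s) (A := E ∩ i) (B := E ∩ iᶜ)
    (disjoint_compl_right.mono inter_subset_right inter_subset_right)
    (hE.inter hi₁) (hE.inter hi₁.compl)
  rw [inter_union_compl] at h3
  rw [h3, h1, h2, add_zero]

lemma re_apply' (μ : ComplexMeasure ℝ) (E : Set ℝ) : μ.re E = (μ E).re := rfl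

lemma im_apply' (μ : ComplexMeasure ℝ) (E : Set ℝ) : μ.im E = (μ E).im := rfl

lemma zero_of_compact (μ : ComplexMeasure ℝ) (E : Set ℝ) (hE : MeasurableSet E)
    (h : ∀ K : Set ℝ, IsCompact K → K ⊆ E → μ K = 0) : μ E = 0 := by
  apply Complex.ext
  · exact signed_zero_of_compact μ.re E hE fun K hK hKE => by rw [re_apply', h K hK hKE]; rfl
  · exact signed_zero_of_compact μ.im E hE fun K hK hKE => by rw [im_apply', h K hK hKE]; rfl

lemma cInt_indicator (μ : ComplexMeasure ℝ) (K : Set ℝ) (hK : MeasurableSet K) :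
    cInt μ (K.indicator fun _ => (1 : ℂ)) = μ K := by
  unfold cInt
  simp only [integral_indicator hK, integral_const, measureReal_restrict_apply_univ]
  have h1 := μ.re.apply_eq_posPart_real_sub_negPart_real hK
  have h2 := μ.im.apply_eq_posPart_real_sub_negPart_real hK
  rw [re_apply'] at h1
  rw [im_apply'] at h2
  apply Complex.ext <;> simp [h1, h2]

lemma conc_ae (μ : ComplexMeasure ℝ) (A : Set ℝ) (hA : MeasurableSet A) (h : ConcOn μ A) :
    (∀ᵐ x ∂μ.re.toJordanDecomposition.posPart, x ∈ A) ∧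
    (∀ᵐ x ∂μ.re.toJordanDecomposition.negPart, x ∈ A) ∧
    (∀ᵐ x ∂μ.im.toJordanDecomposition.posPart, x ∈ A) ∧
    (∀ᵐ x ∂μ.im.toJordanDecomposition.negPart, x ∈ A) := by
  have h1 := jordan_pos_apply_zero μ.re Aᶜ hA.compl fun F hF hFA => by
    rw [re_apply', h F hF hFA]; rfl
  have h2 := jordan_pos_apply_zero μ.im Aᶜ hA.compl fun F hF hFA => by
    rw [im_apply', h F hF hFA]; rfl
  exact ⟨h1.1, h1.2, h2.1, h2.2⟩

lemma cInt_congr (μ : ComplexMeasure ℝ) (A : Set ℝ) (hA : MeasurableSet A) (h : ConcOn μ A)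
    (f g : ℝ → ℂ) (hfg : ∀ x ∈ A, f x = g x) : cInt μ f = cInt μ g := by
  obtain ⟨h1, h2, h3, h4⟩ := conc_ae μ A hA h
  unfold cInt
  rw [integral_congr_ae (h1.mono fun x hx => hfg x hx),
    integral_congr_ae (h2.mono fun x hx => hfg x hx),
    integral_congr_ae (h3.mono fun x hx => hfg x hx),
    integral_congr_ae (h4.mono fun x hx => hfg x hx)]

lemma cInt_tendsto (μ : ComplexMeasure ℝ) (F : ℕ → ℝ → ℂ) (f : ℝ → ℂ) (C : ℝ)
    (hF : ∀ n, Continuous (F n)) (hC : ∀ n x, ‖F n x‖ ≤ C)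
    (hlim : ∀ x, Tendsto (fun n => F n x) atTop (𝓝 (f x))) :
    Tendsto (fun n => cInt μ (F n)) atTop (𝓝 (cInt μ f)) := by
  have key : ∀ m : Measure ℝ, IsFiniteMeasure m →
      Tendsto (fun n => ∫ x, F n x ∂m) atTop (𝓝 (∫ x, f x ∂m)) := by
    intro m hm
    refine tendsto_integral_of_dominated_convergence (fun _ => C)
      (fun n => (hF n).aestronglyMeasurable) (integrable_const C)
      (fun n => Eventually.of_forall (hC n)) (Eventually.of_forall hlim)
  unfold cInt
  exact ((key _ inferInstance).sub (key _ inferInstance)).add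
    (((key _ inferInstance).sub (key _ inferInstance)).const_mul _)

/-- Pairing with a bounded continuous function, as a functional on the Volterra algebra. -/
lemma exists_pairing (φ : ℝ → ℂ) (hφ : Continuous φ) (hb : ∀ x, ‖φ x‖ ≤ 1) :
    ∃ L : Volterra →L[ℂ] ℂ, ∀ h : Volterra,
      L h = ∫ t, φ t * (h : ℝ → ℂ) t ∂(volume.restrict (Ico (0 : ℝ) 1)) := by
  have hint : ∀ h : Volterra, Integrable (fun t => φ t * (h : ℝ → ℂ) t)
      (volume.restrict (Ico (0 : ℝ) 1)) := fun h =>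
    (L1.integrable_coeFn h).bdd_mul hφ.aestronglyMeasurable (Eventually.of_forall hb)
  refine ⟨LinearMap.mkContinuous
    { toFun := fun h => ∫ t, φ t * (h : ℝ → ℂ) t ∂(volume.restrict (Ico (0 : ℝ) 1))
      map_add' := ?_
      map_smul' := ?_ } 1 ?_, fun h => rfl⟩
  · intro f g
    rw [← integral_add (hint f) (hint g)]
    refine integral_congr_ae ?_
    filter_upwards [Lp.coeFn_add f g] with x hx
    rw [hx, Pi.add_apply, mul_add]
  · intro c f
    rw [RingHom.id_apply, ← integral_smul]
    refine integral_congr_ae ?_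
    filter_upwards [Lp.coeFn_smul c f] with x hx
    rw [hx, Pi.smul_apply, mul_smul_comm]
  · intro f
    rw [one_mul, L1.norm_eq_integral_norm]
    refine norm_integral_le_of_norm_le (L1.integrable_coeFn f).norm (Eventually.of_forall ?_)
    intro x
    rw [norm_mul]
    exact mul_le_of_le_one_left (norm_nonneg _) (hb x)

/-- The approximate point mass at `a`. -/
def bump (a : ℝ) (n : ℕ) : Volterra :=
  indicatorConstLp 1 (s := Ioc a (a + 1 / ((n : ℝ) + 1))) measurableSet_Ioc
    (measure_ne_top _ _) ((n : ℂ) + 1)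

lemma norm_natcast_add_one (n : ℕ) : ‖((n : ℂ) + 1)‖ = (n : ℝ) + 1 := by
  have : ((n : ℂ) + 1) = ((n + 1 : ℕ) : ℂ) := by push_cast; rfl
  rw [this, Complex.norm_natCast]; push_cast; rfl

lemma bump_norm (a : ℝ) (n : ℕ) : ‖bump a n‖ ≤ 1 := by
  have hn : (0 : ℝ) < (n : ℝ) + 1 := by positivity
  unfold bump
  rw [norm_indicatorConstLp one_ne_zero ENNReal.one_ne_top, norm_natcast_add_one]
  simp only [ENNReal.toReal_one, div_one, Real.rpow_one]
  have : (volume.restrict (Ico (0 : ℝ) 1)).real (Ioc a (a + 1 / ((n : ℝ) + 1)))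
      ≤ 1 / ((n : ℝ) + 1) := by
    refine ENNReal.toReal_le_of_le_ofReal (by positivity) ?_
    refine (Measure.restrict_apply_le _ _).trans ?_
    rw [Real.volume_Ioc, add_sub_cancel_left]
  calc _ ≤ ((n : ℝ) + 1) * (1 / ((n : ℝ) + 1)) := by gcongr
    _ = 1 := by field_simp

/-- The averaged translate. -/
def avg (φ : ℝ → ℂ) (a : ℝ) (n : ℕ) (s : ℝ) : ℂ :=
  ((n : ℂ) + 1) * ∫ t in a..(a + 1 / ((n : ℝ) + 1)), φ (t + s) * (t : ℂ)

lemma inner_eq (φ : ℝ → ℂ) (h0 : ∀ x, 1 ≤ x → φ x = 0) (a : ℝ) (ha : 0 < a) (n : ℕ) (s : ℝ)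
    (hs : s ∈ Ico (0 : ℝ) 1) :
    ∫ t, φ (t + s) * ((t : ℂ) * (bump a n : ℝ → ℂ) t)
          ∂(volume.restrict (Ico (0 : ℝ) (1 - s))) = avg φ a n s := by
  set I := Ioc a (a + 1 / ((n : ℝ) + 1)) with hI
  have hn : (0 : ℝ) < 1 / ((n : ℝ) + 1) := by positivity
  have hae : (bump a n : ℝ → ℂ) =ᵐ[volume.restrict (Ico (0 : ℝ) (1 - s))]
      I.indicator fun _ => ((n : ℂ) + 1) :=
    ae_mono (Measure.restrict_mono (Ico_subset_Ico_right (by linarith [hs.1])) le_rfl)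
      indicatorConstLp_coeFn
  have e1 : ∫ t, φ (t + s) * ((t : ℂ) * (bump a n : ℝ → ℂ) t)
          ∂(volume.restrict (Ico (0 : ℝ) (1 - s))) =
      ∫ t in Ico (0 : ℝ) (1 - s), φ (t + s) * ((t : ℂ) * I.indicator (fun _ => ((n : ℂ) + 1)) t) := by
    refine integral_congr_ae ?_
    filter_upwards [hae] with x hx
    rw [hx]
  rw [e1, setIntegral_eq_integral_of_forall_compl_eq_zero,
    ← setIntegral_eq_integral_of_forall_compl_eq_zero (s := I)]
  · unfold avg
    rw [intervalIntegral.integral_of_le (by linarith), ← integral_const_mul]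
    refine setIntegral_congr_fun measurableSet_Ioc ?_
    intro t ht
    have ht' : t ∈ I := ht
    simp only [indicator_of_mem ht']
    ring
  · intro x hx
    simp [indicator_of_notMem hx]
  · intro x hx
    by_cases hx0 : x < 0
    · have : x ∉ I := fun h => by linarith [h.1]
      simp [indicator_of_notMem this]
    · rw [h0 (x + s), zero_mul]
      by_contra hc
      exact hx ⟨by linarith, by linarith⟩

lemma avg_continuous (φ : ℝ → ℂ) (hφ : Continuous φ) (a : ℝ) (n : ℕ) :
    Continuous (avg φ a n) := by
  unfold avg
  refine continuous_const.mul ?_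
  apply intervalIntegral.continuous_parametric_intervalIntegral_of_continuous'
  fun_prop

lemma avg_bound (φ : ℝ → ℂ) (hb : ∀ x, ‖φ x‖ ≤ 1) (a : ℝ) (ha : 0 < a)
    (n : ℕ) (s : ℝ) : ‖avg φ a n s‖ ≤ a + 1 := by
  have hn : (0 : ℝ) < 1 / ((n : ℝ) + 1) := by positivity
  have hn1 : 1 / ((n : ℝ) + 1) ≤ 1 := by
    rw [div_le_one (by positivity)]; linarith [(Nat.cast_nonneg n : (0 : ℝ) ≤ n)]
  unfold avg
  rw [norm_mul, norm_natcast_add_one]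
  have := intervalIntegral.norm_integral_le_of_norm_le_const (a := a)
    (b := a + 1 / ((n : ℝ) + 1)) (C := a + 1) (f := fun t => φ (t + s) * (t : ℂ)) (by
      intro t ht
      rw [uIoc_of_le (by linarith)] at ht
      rw [norm_mul, Complex.norm_real, Real.norm_eq_abs, abs_of_pos (by linarith [ht.1])]
      have := ht.2
      have h3 : 0 < t := by linarith [ht.1]
      nlinarith [hb (t + s), norm_nonneg (φ (t + s))])
  rw [add_sub_cancel_left, abs_of_pos hn] at this
  calc _ ≤ ((n : ℝ) + 1) * ((a + 1) * (1 / ((n : ℝ) + 1))) := by gcongr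
    _ = a + 1 := by field_simp

lemma avg_lim (φ : ℝ → ℂ) (hφ : Continuous φ) (a : ℝ) (s : ℝ) :
    Tendsto (fun n => avg φ a n s) atTop (𝓝 (φ (a + s) * a)) := by
  have hc : Continuous fun t : ℝ => φ (t + s) * (t : ℂ) := by fun_prop
  have hd := intervalIntegral.integral_hasDerivAt_right
    (hc.intervalIntegrable a a) (hc.stronglyMeasurableAtFilter _ _) hc.continuousAt
  rw [hasDerivAt_iff_tendsto_slope_zero] at hd
  have hu : Tendsto (fun n : ℕ => 1 / ((n : ℝ) + 1)) atTop (𝓝[≠] 0) := by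
    rw [tendsto_nhdsWithin_iff]
    refine ⟨tendsto_one_div_add_atTop_nhds_zero_nat, Eventually.of_forall fun n => ?_⟩
    have : (0 : ℝ) < 1 / ((n : ℝ) + 1) := by positivity
    exact this.ne'
  have := hd.comp hu
  refine this.congr fun n => ?_
  simp [avg, Complex.real_smul]

/-- The key representation. -/
lemma exists_density (μ : ComplexMeasure ℝ) (hμc : ConcOn μ (Ico 0 1))
    (D : Volterra →L[ℂ] Volterra) (hD : IsDmu μ D)
    (hw : IsCompact (closure
      (⇑(toWeakSpace ℂ Volterra) '' (⇑D '' Metric.closedBall 0 1))))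
    (a : ℝ) (ha : 0 < a) :
    ∃ g : Volterra, ∀ φ : ℝ → ℂ, Continuous φ → (∀ x, ‖φ x‖ ≤ 1) → (∀ x, 1 ≤ x → φ x = 0) →
      ∫ t, φ t * (g : ℝ → ℂ) t ∂(volume.restrict (Ico (0 : ℝ) 1)) =
        cInt μ fun s => φ (a + s) * a := by
  obtain ⟨g, -, hg⟩ := hw.exists_mapClusterPt (f := atTop)
    (u := fun n : ℕ => toWeakSpace ℂ Volterra (D (bump a n))) (by
      rw [le_principal_iff, mem_map]
      refine Eventually.of_forall (fun n : ℕ => subset_closure ?_)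
      exact mem_image_of_mem _ (mem_image_of_mem _ (by simpa using bump_norm a n)))
  refine ⟨(toWeakSpace ℂ Volterra).symm g, fun φ hφ hb h0 => ?_⟩
  obtain ⟨L, hL⟩ := exists_pairing φ hφ hb
  have hcont : Continuous fun x : WeakSpace ℂ Volterra => L ((toWeakSpace ℂ Volterra).symm x) :=
    WeakBilin.eval_continuous (topDualPairing ℂ Volterra).flip L
  have hcl := hg.continuousAt_comp hcont.continuousAt
  have hlim : Tendsto ((fun x : WeakSpace ℂ Volterra => L ((toWeakSpace ℂ Volterra).symm x)) ∘
      fun n : ℕ => toWeakSpace ℂ Volterra (D (bump a n))) atTop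
      (𝓝 (cInt μ fun s => φ (a + s) * a)) := by
    refine (cInt_tendsto μ (avg φ a) _ (a + 1) (avg_continuous φ hφ a) (avg_bound φ hb a ha)
      (avg_lim φ hφ a)).congr fun n => ?_
    simp only [Function.comp_apply, LinearEquiv.symm_apply_apply]
    rw [hL, hD (bump a n) φ hφ.continuousOn (h0 1 le_rfl)]
    exact cInt_congr μ _ measurableSet_Ico hμc _ _ fun s hs => (inner_eq φ h0 a ha n s hs).symm
  rw [← hL]
  have : ClusterPt (L ((toWeakSpace ℂ Volterra).symm g)) (𝓝 (cInt μ fun s => φ (a + s) * a)) :=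
    hcl.clusterPt.mono hlim
  exact eq_of_nhds_neBot this

lemma compact_null (μ : ComplexMeasure ℝ) (hμc : ConcOn μ (Ico 0 1))
    (D : Volterra →L[ℂ] Volterra) (hD : IsDmu μ D)
    (hw : IsCompact (closure
      (⇑(toWeakSpace ℂ Volterra) '' (⇑D '' Metric.closedBall 0 1))))
    (K : Set ℝ) (hK : IsCompact K) (hK1 : K ⊆ Ico 0 1) (hK0 : volume K = 0) : μ K = 0 := by
  rcases K.eq_empty_or_nonempty with rfl | hne
  · simp
  obtain ⟨m, hm, hmax⟩ := hK.exists_isGreatest hne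
  set a := (1 - m) / 2 with ha_def
  have hm1 := (hK1 hm).2
  have ha : 0 < a := by rw [ha_def]; linarith
  obtain ⟨g, hg⟩ := exists_density μ hμc D hD hw a ha
  set K' : Set ℝ := (fun x => x - a) ⁻¹' K with hK'
  have hcl : IsClosed K' := hK.isClosed.preimage (by fun_prop)
  have hK'0 : volume K' = 0 := by
    have := (measurePreserving_sub_right (volume : Measure ℝ) a).measure_preimage
      hK.measurableSet.nullMeasurableSet
    rw [hK', this, hK0]
  have hpos : ∀ n : ℕ, (0 : ℝ) < a / ((n : ℝ) + 1) := fun n => by positivity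
  have hlim0 : Tendsto (fun n : ℕ => a / ((n : ℝ) + 1)) atTop (𝓝 0) := by
    simpa [div_eq_mul_inv] using (tendsto_one_div_add_atTop_nhds_zero_nat (𝕜 := ℝ)).const_mul a
  have hle : ∀ n : ℕ, a / ((n : ℝ) + 1) ≤ a := fun n =>
    div_le_self ha.le (by linarith [(Nat.cast_nonneg n : (0 : ℝ) ≤ n)])
  let φ : ℕ → ℝ → ℂ := fun n x => (((thickenedIndicator (hpos n) K' x : NNReal) : ℝ) : ℂ)
  have hφc : ∀ n, Continuous (φ n) := fun n =>
    Complex.continuous_ofReal.comp (NNReal.continuous_coe.comp (thickenedIndicator (hpos n) K').continuous)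
  have hφb : ∀ n x, ‖φ n x‖ ≤ 1 := fun n x => by
    simp only [φ, Complex.norm_real, Real.norm_eq_abs, NNReal.abs_eq]
    exact_mod_cast thickenedIndicator_le_one (hpos n) K' x
  have hφ0 : ∀ n x, 1 ≤ x → φ n x = 0 := fun n x hx => by
    have : thickenedIndicator (hpos n) K' x = 0 := by
      apply thickenedIndicator_zero
      intro hmem
      rw [Metric.mem_thickening_iff] at hmem
      obtain ⟨z, hz, hd⟩ := hmem
      have h1 : z - a ≤ m := hmax hz
      have h2 := (le_abs_self (x - z)).trans_lt (Real.dist_eq x z ▸ hd)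
      have := hle n
      linarith
    simp only [φ, this, NNReal.coe_zero, Complex.ofReal_zero]
  have hφl : ∀ x, Tendsto (fun n => φ n x) atTop (𝓝 (K'.indicator (fun _ => (1 : ℂ)) x)) := by
    intro x
    have h1 := tendsto_pi_nhds.1
      (thickenedIndicator_tendsto_indicator_closure hpos hlim0 K') x
    rw [hcl.closure_eq] at h1
    have h2 := (Complex.continuous_ofReal.comp NNReal.continuous_coe).continuousAt.tendsto.comp h1
    have e : (Complex.ofReal ∘ NNReal.toReal) (K'.indicator (fun _ => (1 : NNReal)) x) =
        K'.indicator (fun _ => (1 : ℂ)) x := by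
      by_cases hx : x ∈ K' <;> simp [hx]
    rw [e] at h2
    exact h2
  have hL : Tendsto (fun n => ∫ t, φ n t * (g : ℝ → ℂ) t ∂(volume.restrict (Ico (0 : ℝ) 1)))
      atTop (𝓝 (∫ t, K'.indicator (fun _ => (1 : ℂ)) t * (g : ℝ → ℂ) t
        ∂(volume.restrict (Ico (0 : ℝ) 1)))) := by
    refine tendsto_integral_of_dominated_convergence (fun t => ‖(g : ℝ → ℂ) t‖)
      (fun n => (hφc n).aestronglyMeasurable.mul (L1.integrable_coeFn g).aestronglyMeasurable)
      (L1.integrable_coeFn g).norm (fun n => Eventually.of_forall fun t => ?_)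
      (Eventually.of_forall fun t => (hφl t).mul_const _)
    rw [norm_mul]
    exact mul_le_of_le_one_left (norm_nonneg _) (hφb n t)
  have hzero : ∫ t, K'.indicator (fun _ => (1 : ℂ)) t * (g : ℝ → ℂ) t
        ∂(volume.restrict (Ico (0 : ℝ) 1)) = 0 := by
    refine integral_eq_zero_of_ae ?_
    have : ∀ᵐ t ∂(volume.restrict (Ico (0 : ℝ) 1)), t ∉ K' :=
      ae_restrict_of_ae (measure_eq_zero_iff_ae_notMem.1 hK'0)
    filter_upwards [this] with t ht
    simp [ht]
  have hR : Tendsto (fun n => cInt μ fun s => φ n (a + s) * a) atTop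
      (𝓝 (cInt μ fun s => K'.indicator (fun _ => (1 : ℂ)) (a + s) * a)) := by
    refine cInt_tendsto μ _ _ a (fun n => ?_) (fun n x => ?_) (fun x => (hφl (a + x)).mul_const _)
    · have := hφc n
      fun_prop
    · rw [norm_mul, Complex.norm_real a, Real.norm_eq_abs, abs_of_pos ha]
      exact mul_le_of_le_one_left ha.le (hφb n _)
  have heq := tendsto_nhds_unique (hL.congr fun n => hg (φ n) (hφc n) (hφb n) (hφ0 n)) hR
  rw [hzero] at heq
  have e : (fun s : ℝ => K'.indicator (fun _ => (1 : ℂ)) (a + s) * a) =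
      fun s => (K.indicator fun _ => (1 : ℂ)) s * a := by
    funext s
    have : a + s ∈ K' ↔ s ∈ K := by simp [hK']
    by_cases hs : s ∈ K
    · simp [hs, this.2 hs]
    · simp [hs, mt this.1 hs]
  have e2 : cInt μ (fun s => (K.indicator fun _ => (1 : ℂ)) s * a) = μ K * a := by
    rw [← cInt_indicator μ K hK.measurableSet]
    unfold cInt
    simp only [integral_mul_const]
    ring
  rw [e, e2] at heq
  have ha' : (a : ℂ) ≠ 0 := by exact_mod_cast ha.ne'
  exact (mul_eq_zero.1 heq.symm).resolve_right ha'

/-- If `μ` is a finite complex Borel measure on `[0,1)` with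
`t |μ|([0,1-t))` bounded as `t → 0⁺` and the derivation `D_μ f = (Xf) * μ` is weakly
compact on `L¹[0,1)`, then `μ` is absolutely continuous w.r.t. Lebesgue measure and
`t |μ|([0,1-t)) → 0` as `t → 0⁺`. -/
theorem weakly_compact_derivation_abs_continuous (μ : ComplexMeasure ℝ)
    (hμc : ConcOn μ (Ico 0 1))
    (hμb : ∃ C δ : ℝ, 0 < δ ∧ ∀ t : ℝ, 0 < t → t < δ →
      t * (cTV μ (Ico 0 (1 - t))).toReal ≤ C)
    (D : Volterra →L[ℂ] Volterra) (hD : IsDmu μ D)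
    (hw : IsCompact (closure
      (⇑(toWeakSpace ℂ Volterra) '' (⇑D '' Metric.closedBall 0 1)))) :
    (∀ E : Set ℝ, MeasurableSet E → volume E = 0 → μ E = 0) ∧
      Tendsto (fun t : ℝ => t * (cTV μ (Ico 0 (1 - t))).toReal)
        (nhdsWithin 0 (Ioi 0)) (nhds 0) := by
  refine ⟨fun E hE hE0 => ?_, ?_⟩
  · have h1 : μ (E ∩ Ico 0 1) = 0 :=
      zero_of_compact μ _ (hE.inter measurableSet_Ico) fun K hK hKE =>
        compact_null μ hμc D hD hw K hK (hKE.trans inter_subset_right)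
          (measure_mono_null (hKE.trans inter_subset_left) hE0)
    have h2 : μ (E ∩ (Ico 0 1)ᶜ) = 0 :=
      hμc _ (hE.inter measurableSet_Ico.compl) inter_subset_right
    have h3 := VectorMeasure.of_union (v := μ) (A := E ∩ Ico 0 1) (B := E ∩ (Ico 0 1)ᶜ)
      (disjoint_compl_right.mono inter_subset_right inter_subset_right)
      (hE.inter measurableSet_Ico) (hE.inter measurableSet_Ico.compl)
    rw [inter_union_compl] at h3
    rw [h3, h1, h2, add_zero]
  · have hfin : IsFiniteMeasure (cTV μ) := by
      unfold cTV SignedMeasure.totalVariation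
      infer_instance
    have hlim : Tendsto (fun t : ℝ => t * (cTV μ univ).toReal) (nhdsWithin 0 (Ioi 0)) (nhds 0) := by
      have : Tendsto (fun t : ℝ => t * (cTV μ univ).toReal) (nhds 0)
          (nhds (0 * (cTV μ univ).toReal)) := tendsto_id.mul_const _
      rw [zero_mul] at this
      exact this.mono_left nhdsWithin_le_nhds
    refine tendsto_of_tendsto_of_tendsto_of_le_of_le' tendsto_const_nhds hlim ?_ ?_
    · filter_upwards [self_mem_nhdsWithin] with t ht
      exact mul_nonneg (le_of_lt ht) ENNReal.toReal_nonneg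
    · filter_upwards [self_mem_nhdsWithin] with t ht
      exact mul_le_mul_of_nonneg_left
        (ENNReal.toReal_mono (measure_ne_top _ _) (measure_mono (subset_univ _))) (le_of_lt ht)
end
end

section
/- Let μ be an absolutely continuous finite complex Borel measure on [0,1) such that t·|μ|([0,1−t)) → 0 as t → 0⁺. Then the operator D̄_μ on M[0,1) defined by D̄_μ ν = (Xν)*μ is a compact operator. -/
open MeasureTheory Set Filter Topology

noncomputable section

theorem jordan_spec (s : SignedMeasure ℝ) : ∃ i : Set ℝ, MeasurableSet i ∧
    (∀ E, MeasurableSet E → s.toJordanDecomposition.posPart.real E = s (i ∩ E)) ∧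
    (∀ E, MeasurableSet E → s.toJordanDecomposition.negPart.real E = -s (iᶜ ∩ E)) := by
  obtain ⟨i, hi, h2, h3, hp, hn⟩ := s.toJordanDecomposition_spec
  refine ⟨i, hi, fun E hE => ?_, fun E hE => ?_⟩
  · rw [hp, SignedMeasure.toMeasureOfZeroLE_real_apply _ h2 hi hE]
  · rw [hn, SignedMeasure.toMeasureOfLEZero_real_apply _ h3 hi.compl hE]

theorem jordan_null (s : SignedMeasure ℝ) (A : Set ℝ) (hA : MeasurableSet A)
    (h : ∀ E, MeasurableSet E → E ⊆ A → s E = 0) :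
    s.toJordanDecomposition.posPart A = 0 ∧ s.toJordanDecomposition.negPart A = 0 := by
  obtain ⟨i, hi, h2, h3⟩ := jordan_spec s
  constructor
  · rw [← measureReal_eq_zero_iff, h2 A hA, h _ (hi.inter hA) inter_subset_right]
  · rw [← measureReal_eq_zero_iff, h3 A hA, h _ (hi.compl.inter hA) inter_subset_right, neg_zero]

theorem tv_le (s : SignedMeasure ℝ) (C : ℝ) (h : ∀ E, MeasurableSet E → |s E| ≤ C) :
    s.totalVariation.real univ ≤ 2 * C := by
  obtain ⟨i, hi, h2, h3⟩ := jordan_spec s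
  rw [SignedMeasure.totalVariation, measureReal_add_apply, h2 _ .univ, h3 _ .univ,
    inter_univ, inter_univ]
  have a := le_abs_self (s i)
  have b := neg_le_abs (s iᶜ)
  linarith [h i hi, h _ hi.compl]

theorem cTV_le (s : ComplexMeasure ℝ) (C : ℝ) (h : ∀ E, MeasurableSet E → ‖s E‖ ≤ C) :
    (cTV s univ).toReal ≤ 4 * C := by
  have a := tv_le s.re C fun E hE => (Complex.abs_re_le_norm (s E)).trans (h E hE)
  have b := tv_le s.im C fun E hE => (Complex.abs_im_le_norm (s E)).trans (h E hE)
  have : (cTV s univ).toReal = s.re.totalVariation.real univ + s.im.totalVariation.real univ := by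
    rw [cTV, ← measureReal_add_apply
      (h₁ := by simp [SignedMeasure.totalVariation]) (h₂ := by simp [SignedMeasure.totalVariation])]
    rfl
  linarith

theorem compact_lemma {E : Type*} [NormedAddCommGroup E] [NormedSpace ℝ E] [CompleteSpace E]
    (F : ℝ → E) (hF : Continuous F) : ∃ K : Set E, IsCompact K ∧
      ∀ m : Measure ℝ, m univ ≤ 1 → m (Ico 0 1)ᶜ = 0 → Integrable F m ∧ ∫ t, F t ∂m ∈ K := by
  have hc : IsCompact (F '' Icc 0 1 ∪ {0}) := (isCompact_Icc.image hF).union isCompact_singleton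
  have hK : IsCompact (closure (convexHull ℝ (F '' Icc 0 1 ∪ {0}))) :=
    hc.totallyBounded.convexHull.closure.isCompact_of_isClosed isClosed_closure
  have hsub : F '' Icc 0 1 ∪ {0} ⊆ closure (convexHull ℝ (F '' Icc 0 1 ∪ {0})) :=
    (subset_convexHull ℝ _).trans subset_closure
  have hconv : Convex ℝ (closure (convexHull ℝ (F '' Icc 0 1 ∪ {0}))) :=
    (convex_convexHull ℝ _).closure
  refine ⟨_, hK, fun m hm hm0 => ?_⟩
  set K := closure (convexHull ℝ (F '' Icc 0 1 ∪ {0})) with hKdef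
  have : IsFiniteMeasure m := ⟨hm.trans_lt (by simp)⟩
  have hae : ∀ᵐ t ∂m, t ∈ Ico (0 : ℝ) 1 := hm0
  have hmem : ∀ᵐ t ∂m, F t ∈ K := by
    filter_upwards [hae] with t ht
    exact hsub (Or.inl ⟨t, ⟨ht.1, ht.2.le⟩, rfl⟩)
  obtain ⟨C, hC⟩ := hK.isBounded.exists_norm_le
  have hint : Integrable F m := by
    refine Integrable.of_bound hF.aestronglyMeasurable C ?_
    filter_upwards [hmem] with t ht using hC _ ht
  refine ⟨hint, ?_⟩
  by_cases hz : m = 0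
  · subst hz
    simpa using hsub (Or.inr rfl)
  have : NeZero m := ⟨hz⟩
  have hav : ⨍ t, F t ∂m ∈ K := hconv.average_mem isClosed_closure hmem hint
  rw [← measure_smul_average]
  refine hconv.smul_mem_of_zero_mem (hsub (Or.inr rfl)) hav ⟨measureReal_nonneg, ?_⟩
  exact ENNReal.toReal_le_of_le_ofReal zero_le_one (by simpa using hm)

abbrev L1R := Lp ℂ 1 (volume : Measure ℝ)

/-- integration over `E` as a functional on `L¹`. -/
def setInt (E : Set ℝ) : L1R →L[ℂ] ℂ :=
  LinearMap.mkContinuous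
    { toFun := fun f => ∫ x in E, f x
      map_add' := fun f g => by
        rw [integral_congr_ae (ae_restrict_of_ae (Lp.coeFn_add f g))]
        exact integral_add (L1.integrable_coeFn f).integrableOn (L1.integrable_coeFn g).integrableOn
      map_smul' := fun c f => by
        rw [integral_congr_ae (ae_restrict_of_ae (Lp.coeFn_smul c f))]
        exact integral_smul c _ } 1 (fun f => by
      rw [one_mul, L1.norm_eq_integral_norm]
      exact (norm_integral_le_integral_norm _).trans
        (setIntegral_le_integral (L1.integrable_coeFn f).norm
          (ae_of_all _ fun _ => norm_nonneg _)))

theorem setInt_apply (E : Set ℝ) (f : L1R) : setInt E f = ∫ x in E, f x := rfl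

theorem setInt_norm_le (E : Set ℝ) (f : L1R) : ‖setInt E f‖ ≤ ‖f‖ := by
  rw [setInt_apply, L1.norm_eq_integral_norm]
  exact (norm_integral_le_integral_norm _).trans
    (setIntegral_le_integral (L1.integrable_coeFn f).norm (ae_of_all _ fun _ => norm_nonneg _))

/-- translation by `t` -/
def trl (t : ℝ) (f : L1R) : L1R := DomAddAct.mk (-t) +ᵥ f

theorem trl_cont (f : L1R) : Continuous fun t => trl t f := by
  have : Continuous fun t : ℝ => (DomAddAct.mk (-t), f) :=
    (DomAddAct.continuous_mk.comp continuous_neg).prodMk continuous_const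
  have : Fact ((1 : ENNReal) ≠ ⊤) := ⟨by simp⟩
  exact continuous_vadd.comp ‹Continuous fun t : ℝ => (DomAddAct.mk (-t), f)›

theorem trl_add (t : ℝ) (f g : L1R) : trl t (f + g) = trl t f + trl t g :=
  DomAddAct.vadd_Lp_add _ _ _
theorem trl_sub (t : ℝ) (f g : L1R) : trl t (f - g) = trl t f - trl t g :=
  DomAddAct.vadd_Lp_sub _ _ _
theorem trl_smul (t : ℝ) (c : ℂ) (f : L1R) : trl t (c • f) = c • trl t f := by
  rcases f with ⟨⟨_⟩, _⟩; rfl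

theorem dens_int (m : Measure ℝ) [IsFiniteMeasure m] :
    Integrable (fun x => ((m.rnDeriv volume x).toReal : ℂ)) volume :=
  Measure.integrable_toReal_rnDeriv.ofReal

def dens (m : Measure ℝ) [IsFiniteMeasure m] : L1R := (dens_int m).toL1 _

theorem setInt_trl_dens (m : Measure ℝ) [IsFiniteMeasure m] (hm : m ≪ volume)
    (E : Set ℝ) (hE : MeasurableSet E) (t : ℝ) :
    setInt E (trl t (dens m)) = ∫ s, E.indicator (1 : ℝ → ℂ) (t + s) ∂m := by
  have h1 : (trl t (dens m) : ℝ → ℂ) =ᵐ[volume]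
      fun x => ((m.rnDeriv volume (-t + x)).toReal : ℂ) := by
    have a := DomAddAct.vadd_Lp_ae_eq (DomAddAct.mk (-t)) (dens m)
    have b := (measurePreserving_add_left volume (-t)).quasiMeasurePreserving.ae_eq_comp
      (dens_int m).coeFn_toL1
    exact a.trans b
  rw [setInt_apply, integral_congr_ae (ae_restrict_of_ae h1), ← integral_rnDeriv_smul hm,
    ← integral_indicator hE,
    ← integral_add_left_eq_self (μ := (volume : Measure ℝ)) _ t]
  congr 1
  ext s
  by_cases h : t + s ∈ E <;> simp [h]

/-- vector valued integral against a complex measure -/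
def vInt (μ : ComplexMeasure ℝ) (f : ℝ → L1R) : L1R :=
  ((∫ x, f x ∂μ.re.toJordanDecomposition.posPart) -
      ∫ x, f x ∂μ.re.toJordanDecomposition.negPart) +
    Complex.I • ((∫ x, f x ∂μ.im.toJordanDecomposition.posPart) -
      ∫ x, f x ∂μ.im.toJordanDecomposition.negPart)

theorem parts_null (μ : ComplexMeasure ℝ) (A : Set ℝ) (hA : MeasurableSet A)
    (h : ∀ E, MeasurableSet E → E ⊆ A → μ E = 0) :
    (μ.re.toJordanDecomposition.posPart A = 0 ∧ μ.re.toJordanDecomposition.negPart A = 0) ∧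
    (μ.im.toJordanDecomposition.posPart A = 0 ∧ μ.im.toJordanDecomposition.negPart A = 0) := by
  constructor
  · refine jordan_null _ A hA fun E hE hEA => ?_
    change (μ E).re = 0
    rw [h E hE hEA]; rfl
  · refine jordan_null _ A hA fun E hE hEA => ?_
    change (μ E).im = 0
    rw [h E hE hEA]; rfl

theorem parts_le (μ : ComplexMeasure ℝ) (h : (cTV μ univ).toReal ≤ 1) :
    (μ.re.toJordanDecomposition.posPart univ ≤ 1 ∧
      μ.re.toJordanDecomposition.negPart univ ≤ 1) ∧
    (μ.im.toJordanDecomposition.posPart univ ≤ 1 ∧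
      μ.im.toJordanDecomposition.negPart univ ≤ 1) := by
  have e : cTV μ univ = (μ.re.toJordanDecomposition.posPart univ +
      μ.re.toJordanDecomposition.negPart univ) + (μ.im.toJordanDecomposition.posPart univ +
      μ.im.toJordanDecomposition.negPart univ) := rfl
  have hfin : cTV μ univ ≠ ⊤ := by
    rw [e]; simp
  have h1 : cTV μ univ ≤ 1 := by
    rw [← ENNReal.toReal_le_toReal hfin (by simp)]; simpa using h
  rw [e] at h1
  refine ⟨⟨le_trans ?_ h1, le_trans ?_ h1⟩, ⟨le_trans ?_ h1, le_trans ?_ h1⟩⟩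
  · exact le_self_add.trans le_self_add
  · exact le_add_self.trans le_self_add
  · exact le_self_add.trans le_add_self
  · exact le_add_self.trans le_add_self

/-- density of complex measure -/
def cdens (μ : ComplexMeasure ℝ) : L1R :=
  (dens μ.re.toJordanDecomposition.posPart - dens μ.re.toJordanDecomposition.negPart) +
    Complex.I • (dens μ.im.toJordanDecomposition.posPart -
      dens μ.im.toJordanDecomposition.negPart)

theorem setInt_cdens (μ : ComplexMeasure ℝ)
    (hac : ∀ E : Set ℝ, MeasurableSet E → volume E = 0 → μ E = 0)
    (E : Set ℝ) (hE : MeasurableSet E) (t : ℝ) :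
    setInt E (trl t (cdens μ)) = cInt μ fun s => E.indicator (1 : ℝ → ℂ) (t + s) := by
  have key : ∀ A, MeasurableSet A → volume A = 0 → _ := fun A hA h0 =>
    parts_null μ A hA fun B hB hBA => hac B hB (measure_mono_null hBA h0)
  rw [cdens, trl_add, trl_smul, trl_sub, trl_sub, map_add, map_smul, map_sub, map_sub,
    setInt_trl_dens _ (.mk fun A hA h => (key A hA h).1.1) E hE,
    setInt_trl_dens _ (.mk fun A hA h => (key A hA h).1.2) E hE,
    setInt_trl_dens _ (.mk fun A hA h => (key A hA h).2.1) E hE,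
    setInt_trl_dens _ (.mk fun A hA h => (key A hA h).2.2) E hE]
  rfl

/-- Let `μ` be an absolutely continuous finite complex Borel measure on
`[0,1)` with `t |μ|([0,1-t)) → 0` as `t → 0⁺`. Then the operator `D̄_μ ν = (Xν) * μ` on
`M[0,1)` is compact: the image of the (total variation) unit ball is relatively
norm-compact, expressed here sequentially (equivalent, since the total variation norm
induces a metric). -/
theorem Dbar_compact_on_M (μ : ComplexMeasure ℝ)
    (hμc : ConcOn μ (Ico 0 1))
    (hac : ∀ E : Set ℝ, MeasurableSet E → volume E = 0 → μ E = 0)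
    (h0 : Tendsto (fun t : ℝ => t * (cTV μ (Ico 0 (1 - t))).toReal)
      (nhdsWithin 0 (Ioi 0)) (nhds 0)) :
    ∀ ν : ℕ → ComplexMeasure ℝ, (∀ k, ConcOn (ν k) (Ico 0 1)) →
      (∀ k, (cTV (ν k) univ).toReal ≤ 1) →
      ∀ ρ : ℕ → ComplexMeasure ℝ, (∀ k, IsXConv μ (ν k) (ρ k)) →
        ∃ φ : ℕ → ℕ, StrictMono φ ∧
          ∃ ρ₀ : ComplexMeasure ℝ,
            Tendsto (fun k => (cTV (ρ (φ k) - ρ₀) univ).toReal) atTop (nhds 0) := by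
  intro ν hν hν1 ρ hρ
  set F : ℝ → L1R := fun t => (t : ℂ) • trl t (cdens μ) with hFdef
  have hF : Continuous F := Complex.continuous_ofReal.smul (trl_cont _)
  obtain ⟨K, hK, hKm⟩ := compact_lemma F hF
  set Φ : (L1R × L1R) × (L1R × L1R) → L1R :=
    fun p => (p.1.1 - p.1.2) + Complex.I • (p.2.1 - p.2.2) with hΦ
  have hΦc : Continuous Φ := by fun_prop
  have hK' : IsCompact (Φ '' ((K ×ˢ K) ×ˢ (K ×ˢ K))) :=
    ((hK.prod hK).prod (hK.prod hK)).image hΦc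
  have parts : ∀ k, _ := fun k =>
    (⟨parts_le _ (hν1 k), parts_null (ν k) (Ico 0 1)ᶜ measurableSet_Ico.compl (hν k)⟩ : _ ∧ _)
  have hmem : ∀ k, vInt (ν k) F ∈ Φ '' ((K ×ˢ K) ×ˢ (K ×ˢ K)) := fun k =>
    ⟨((_, _), (_, _)),
      ⟨⟨(hKm _ (parts k).1.1.1 (parts k).2.1.1).2, (hKm _ (parts k).1.1.2 (parts k).2.1.2).2⟩,
        ⟨(hKm _ (parts k).1.2.1 (parts k).2.2.1).2, (hKm _ (parts k).1.2.2 (parts k).2.2.2).2⟩⟩,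
      rfl⟩
  have hρE : ∀ k E, MeasurableSet E → ρ k E = setInt (E ∩ Ico 0 1) (vInt (ν k) F) := by
    intro k E hE
    have hEI : MeasurableSet (E ∩ Ico (0 : ℝ) 1) := hE.inter measurableSet_Ico
    have h1 : ρ k E = ρ k (E ∩ Ico 0 1) := by
      have a := VectorMeasure.of_add_of_sdiff (v := ρ k) hEI hE inter_subset_left
      rw [(hρ k).1 (E \ (E ∩ Ico 0 1)) (hE.diff hEI) (by
        intro x hx hx'
        exact hx.2 ⟨hx.1, hx'⟩), add_zero] at a
      exact a.symm
    rw [h1, (hρ k).2 _ hEI inter_subset_right]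
    have h2 : (fun t : ℝ => (t : ℂ) * cInt μ fun s =>
        (E ∩ Ico (0 : ℝ) 1).indicator (1 : ℝ → ℂ) (t + s)) =
        fun t => setInt (E ∩ Ico 0 1) (F t) := by
      ext t
      rw [hFdef, map_smul, setInt_cdens μ hac _ hEI, smul_eq_mul]
    rw [h2, cInt, vInt, map_add, map_smul, map_sub, map_sub,
      ContinuousLinearMap.integral_comp_comm _ (hKm _ (parts k).1.1.1 (parts k).2.1.1).1,
      ContinuousLinearMap.integral_comp_comm _ (hKm _ (parts k).1.1.2 (parts k).2.1.2).1,
      ContinuousLinearMap.integral_comp_comm _ (hKm _ (parts k).1.2.1 (parts k).2.2.1).1,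
      ContinuousLinearMap.integral_comp_comm _ (hKm _ (parts k).1.2.2 (parts k).2.2.2).1]
    rfl
  obtain ⟨G, -, φ, hφ, hlim⟩ := hK'.tendsto_subseq hmem
  have hGi : Integrable ((Ico (0 : ℝ) 1).indicator G) volume :=
    (L1.integrable_coeFn G).indicator measurableSet_Ico
  refine ⟨φ, hφ, volume.withDensityᵥ ((Ico (0 : ℝ) 1).indicator G), ?_⟩
  have hz : Tendsto (fun k => 4 * ‖vInt (ν (φ k)) F - G‖) atTop (nhds 0) := by
    have := (tendsto_iff_norm_sub_tendsto_zero.1 hlim).const_mul 4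
    simpa using this
  refine squeeze_zero (fun _ => ENNReal.toReal_nonneg) (fun k => ?_) hz
  refine cTV_le _ _ fun E hE => ?_
  have : (ρ (φ k) - volume.withDensityᵥ ((Ico (0 : ℝ) 1).indicator G)) E =
      setInt (E ∩ Ico 0 1) (vInt (ν (φ k)) F - G) := by
    rw [sub_apply, hρE _ _ hE, withDensityᵥ_apply hGi hE, map_sub, setInt_apply _ G,
      setIntegral_indicator measurableSet_Ico]
  rw [this]
  exact setInt_norm_le _ _
end
end

section
/- For a finite complex Borel measure μ on [0,1) with t·|μ|([0,1−t)) bounded as t → 0⁺, the following are equivalent: (a) D_μ f = (Xf)*μ is a compact operator on L¹[0,1); (b) D_μ is weakly compact on L¹[0,1); (c) μ is absolutely continuous and t·|μ|([0,1−t)) → 0 as t → 0⁺. -/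
open MeasureTheory Set Filter Topology

noncomputable section

lemma aux_signed_ac (s : SignedMeasure ℝ) (m : Measure ℝ)
    (h : ∀ E : Set ℝ, MeasurableSet E → m E = 0 → s E = 0) :
    s.toJordanDecomposition.posPart ≪ m ∧ s.toJordanDecomposition.negPart ≪ m := by
  rw [← SignedMeasure.totalVariation_absolutelyContinuous_iff]
  have h1 : s ≪ᵥ m.toENNRealVectorMeasure := by
    refine VectorMeasure.AbsolutelyContinuous.mk fun E hE h0 => h E hE ?_
    rwa [Measure.toENNRealVectorMeasure_apply_measurable hE] at h0
  rw [SignedMeasure.absolutelyContinuous_ennreal_iff] at h1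
  simpa using h1

lemma aux_complex_ac (μ : ComplexMeasure ℝ) (m : Measure ℝ)
    (h : ∀ E : Set ℝ, MeasurableSet E → m E = 0 → μ E = 0) :
    (μ.re.toJordanDecomposition.posPart ≪ m ∧ μ.re.toJordanDecomposition.negPart ≪ m) ∧
    (μ.im.toJordanDecomposition.posPart ≪ m ∧ μ.im.toJordanDecomposition.negPart ≪ m) := by
  constructor
  · refine aux_signed_ac _ _ fun E hE h0 => ?_
    have := h E hE h0
    change (μ E).re = 0
    simp [this]
  · refine aux_signed_ac _ _ fun E hE h0 => ?_
    have := h E hE h0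
    change (μ E).im = 0
    simp [this]

lemma aux_conc (μ : ComplexMeasure ℝ) (hμ : ConcOn μ (Ico 0 1)) :
    ((∀ᵐ x ∂μ.re.toJordanDecomposition.posPart, x ∈ Ico (0:ℝ) 1) ∧
      (∀ᵐ x ∂μ.re.toJordanDecomposition.negPart, x ∈ Ico (0:ℝ) 1)) ∧
    ((∀ᵐ x ∂μ.im.toJordanDecomposition.posPart, x ∈ Ico (0:ℝ) 1) ∧
      (∀ᵐ x ∂μ.im.toJordanDecomposition.negPart, x ∈ Ico (0:ℝ) 1)) := by
  have key := aux_complex_ac μ (Measure.count.restrict (Ico (0:ℝ) 1)) (fun E hE h0 => by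
    apply hμ E hE
    rw [Measure.restrict_apply hE, Measure.count_eq_zero_iff] at h0
    intro x hx hx'
    have : x ∈ E ∩ Ico 0 1 := ⟨hx, hx'⟩
    rw [h0] at this
    exact this)
  have hae : ∀ᵐ x ∂(Measure.count.restrict (Ico (0:ℝ) 1)), x ∈ Ico (0:ℝ) 1 :=
    ae_restrict_mem measurableSet_Ico
  exact ⟨⟨key.1.1 hae, key.1.2 hae⟩, ⟨key.2.1 hae, key.2.2 hae⟩⟩

lemma aux_cInt_congr (μ : ComplexMeasure ℝ) (hμ : ConcOn μ (Ico 0 1)) (F G : ℝ → ℂ)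
    (h : ∀ x ∈ Ico (0:ℝ) 1, F x = G x) : cInt μ F = cInt μ G := by
  have := aux_conc μ hμ
  unfold cInt
  rw [integral_congr_ae (this.1.1.mono h), integral_congr_ae (this.1.2.mono h),
    integral_congr_ae (this.2.1.mono h), integral_congr_ae (this.2.2.mono h)]

/-- the function `t f(t)` extended by zero -/
def extH (f : Volterra) : ℝ → ℂ := (Ico (0:ℝ) 1).indicator (fun t => (t:ℂ) * (f : ℝ → ℂ) t)

lemma extH_integrable (f : Volterra) : Integrable (extH f) := by
  unfold extH
  rw [integrable_indicator_iff measurableSet_Ico]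
  refine Integrable.mono (L1.integrable_coeFn f) ?_ ?_
  · exact (Complex.continuous_ofReal.aestronglyMeasurable).mul (L1.integrable_coeFn f).1
  · filter_upwards [ae_restrict_mem measurableSet_Ico] with x hx
    rw [norm_mul, Complex.norm_real, Real.norm_of_nonneg hx.1]
    exact mul_le_of_le_one_left (norm_nonneg _) hx.2.le

lemma extH_norm_le (f : Volterra) : ∫ t, ‖extH f t‖ ≤ ‖f‖ := by
  rw [L1.norm_eq_integral_norm]
  have : (fun t => ‖extH f t‖) =
      (Ico (0:ℝ) 1).indicator (fun t => ‖(t:ℂ) * (f : ℝ → ℂ) t‖) := by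
    funext t; unfold extH; rw [norm_indicator_eq_indicator_norm]
  rw [this, integral_indicator measurableSet_Ico]
  have h1 : Integrable (fun t : ℝ => (t:ℂ) * (f : ℝ → ℂ) t) (volume.restrict (Ico (0:ℝ) 1)) := by
    have := extH_integrable f
    unfold extH at this
    rwa [integrable_indicator_iff measurableSet_Ico] at this
  refine integral_mono_ae h1.norm (L1.integrable_coeFn f).norm ?_
  filter_upwards [ae_restrict_mem measurableSet_Ico] with x hx
  rw [norm_mul, Complex.norm_real, Real.norm_of_nonneg hx.1]
  exact mul_le_of_le_one_left (norm_nonneg _) hx.2.le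

/-- reformulation of the defining property -/
lemma aux_hD {μ : ComplexMeasure ℝ} (hμ : ConcOn μ (Ico 0 1))
    {D : Volterra →L[ℂ] Volterra} (hD : IsDmu μ D) (f : Volterra) (φ : ℝ → ℂ)
    (hφ : Continuous φ) (h0 : ∀ x, x ∉ Ioo (0:ℝ) 1 → φ x = 0) :
    (∫ t in Ico (0:ℝ) 1, φ t * (D f : ℝ → ℂ) t) =
      cInt μ fun s => ∫ t, φ (t + s) * extH f t := by
  rw [hD f φ hφ.continuousOn (h0 1 (by simp))]
  refine aux_cInt_congr μ hμ _ _ fun s hs => ?_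
  rw [← integral_indicator measurableSet_Ico]
  refine integral_congr_ae (Eventually.of_forall fun t => ?_)
  simp only [extH, indicator]
  by_cases h1 : t ∈ Ico (0:ℝ) (1 - s)
  · have : t ∈ Ico (0:ℝ) 1 := ⟨h1.1, by linarith [h1.2, hs.1]⟩
    simp only [h1, this, if_true]
  · rw [if_neg h1]
    by_cases h2 : t ∈ Ico (0:ℝ) 1
    · rw [h0 (t + s), zero_mul]
      intro h3
      exact h1 ⟨h2.1, by linarith [h3.2]⟩
    · simp [h2]

lemma aux_bdd (φ : ℝ → ℂ) (hφ : Continuous φ) (h0 : ∀ x, x ∉ Ioo (0:ℝ) 1 → φ x = 0) :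
    ∃ M : ℝ, 0 ≤ M ∧ ∀ x, ‖φ x‖ ≤ M := by
  obtain ⟨M, hM⟩ := isCompact_Icc.exists_bound_of_continuousOn (s := Icc (0:ℝ) 1) hφ.continuousOn
  refine ⟨max M 0, le_max_right _ _, fun x => ?_⟩
  by_cases h : x ∈ Ioo (0:ℝ) 1
  · exact (hM x (Ioo_subset_Icc_self h)).trans (le_max_left _ _)
  · simp [h0 x h]

lemma aux_F_cont (φ : ℝ → ℂ) (hφ : Continuous φ) (M : ℝ) (hM : ∀ x, ‖φ x‖ ≤ M)
    (h : ℝ → ℂ) (hh : Integrable h) : Continuous fun s : ℝ => ∫ t, φ (t + s) * h t := by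
  refine continuous_of_dominated (bound := fun t => M * ‖h t‖) ?_ ?_ (hh.norm.const_mul _) ?_
  · intro s
    exact (Continuous.aestronglyMeasurable (by fun_prop)).mul hh.1
  · intro s
    refine Eventually.of_forall fun t => ?_
    rw [norm_mul]; gcongr; exact hM _
  · exact Eventually.of_forall fun t => by fun_prop

lemma aux_F_bdd (φ : ℝ → ℂ) (M : ℝ) (hM : ∀ x, ‖φ x‖ ≤ M)
    (h : ℝ → ℂ) (hh : Integrable h) (s : ℝ) :
    ‖∫ t, φ (t + s) * h t‖ ≤ M * ∫ t, ‖h t‖ := by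
  rw [← integral_const_mul]
  refine norm_integral_le_of_norm_le (hh.norm.const_mul _) (Eventually.of_forall fun t => ?_)
  rw [norm_mul]; gcongr; exact hM _

lemma aux_pairing (φ : ℝ → ℂ) (hφ : Continuous φ) :
    ∃ L : Volterra →L[ℂ] ℂ, ∀ f : Volterra, L f = ∫ t in Ico (0:ℝ) 1, φ t * (f : ℝ → ℂ) t := by
  obtain ⟨M, hM⟩ := isCompact_Icc.exists_bound_of_continuousOn (s := Icc (0:ℝ) 1) hφ.continuousOn
  have hb : ∀ f : Volterra, ∀ᵐ t ∂(volume.restrict (Ico (0:ℝ) 1)),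
      ‖φ t * (f : ℝ → ℂ) t‖ ≤ M * ‖(f : ℝ → ℂ) t‖ := by
    intro f
    filter_upwards [ae_restrict_mem measurableSet_Ico] with x hx
    rw [norm_mul]; gcongr; exact hM _ (Ico_subset_Icc_self hx)
  have hi : ∀ f : Volterra, Integrable (fun t => φ t * (f : ℝ → ℂ) t)
      (volume.restrict (Ico (0:ℝ) 1)) := by
    intro f
    exact Integrable.mono' ((L1.integrable_coeFn f).norm.const_mul M)
      (hφ.aestronglyMeasurable.mul (L1.integrable_coeFn f).1) (hb f)
  refine ⟨LinearMap.mkContinuous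
    { toFun := fun f : Volterra => ∫ t in Ico (0:ℝ) 1, φ t * (f : ℝ → ℂ) t
      map_add' := ?_
      map_smul' := ?_ } M ?_, fun f => rfl⟩
  · intro f g
    rw [← integral_add (hi f) (hi g)]
    refine integral_congr_ae ?_
    filter_upwards [Lp.coeFn_add f g] with x hx
    rw [hx, Pi.add_apply, mul_add]
  · intro c f
    simp only [RingHom.id_apply, smul_eq_mul]
    rw [← integral_const_mul]
    refine integral_congr_ae ?_
    filter_upwards [Lp.coeFn_smul c f] with x hx
    rw [hx, Pi.smul_apply, smul_eq_mul]; ring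
  · intro f
    change ‖∫ t in Ico (0:ℝ) 1, φ t * (f : ℝ → ℂ) t‖ ≤ _
    rw [L1.norm_eq_integral_norm, ← integral_const_mul]
    exact norm_integral_le_of_norm_le ((L1.integrable_coeFn f).norm.const_mul M) (hb f)


lemma aux_density_one (ν : Measure ℝ) [IsFiniteMeasure ν] (h : ν ≪ volume) :
    ∃ g : ℝ → ℂ, Integrable g ∧ ∀ G : ℝ → ℂ, Continuous G → (∃ M, ∀ x, ‖G x‖ ≤ M) →
      Integrable (fun x => G x * g x) ∧ ∫ x, G x ∂ν = ∫ x, G x * g x := by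
  have hg : Integrable (fun x => (((ν.rnDeriv volume x).toReal : ℝ) : ℂ)) :=
    (Measure.integrable_toReal_rnDeriv (μ := ν) (ν := volume)).ofReal
  refine ⟨_, hg, fun G hG ⟨M, hM⟩ => ⟨?_, ?_⟩⟩
  · exact hg.bdd_mul hG.aestronglyMeasurable (Eventually.of_forall hM)
  · rw [← integral_rnDeriv_smul h]
    refine integral_congr_ae (Eventually.of_forall fun x => ?_)
    simp [mul_comm]

lemma aux_density (μ : ComplexMeasure ℝ)
    (h : ∀ E : Set ℝ, MeasurableSet E → volume E = 0 → μ E = 0) :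
    ∃ g : ℝ → ℂ, Integrable g ∧ ∀ G : ℝ → ℂ, Continuous G → (∃ M, ∀ x, ‖G x‖ ≤ M) →
      cInt μ G = ∫ x, G x * g x := by
  obtain ⟨⟨h1, h2⟩, ⟨h3, h4⟩⟩ := aux_complex_ac μ volume h
  obtain ⟨g1, i1, e1⟩ := aux_density_one _ h1
  obtain ⟨g2, i2, e2⟩ := aux_density_one _ h2
  obtain ⟨g3, i3, e3⟩ := aux_density_one _ h3
  obtain ⟨g4, i4, e4⟩ := aux_density_one _ h4
  refine ⟨fun x => (g1 x - g2 x) + Complex.I * (g3 x - g4 x),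
    (i1.sub i2).add ((i3.sub i4).const_mul _), fun G hG hM => ?_⟩
  obtain ⟨j1, k1⟩ := e1 G hG hM
  obtain ⟨j2, k2⟩ := e2 G hG hM
  obtain ⟨j3, k3⟩ := e3 G hG hM
  obtain ⟨j4, k4⟩ := e4 G hG hM
  unfold cInt
  rw [k1, k2, k3, k4, ← integral_sub j1 j2, ← integral_sub j3 j4, ← integral_const_mul,
    ← integral_add (f := fun x => G x * g1 x - G x * g2 x)
      (g := fun x => Complex.I * (G x * g3 x - G x * g4 x)) (j1.sub j2)
      ((j3.sub j4).const_mul _)]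
  refine integral_congr_ae (Eventually.of_forall fun x => ?_)
  simp only
  ring

lemma aux_conv_integrable (h q : ℝ → ℂ) (hh : Integrable h) (hq : Integrable q) :
    Integrable (fun p : ℝ × ℝ => h p.2 * q (p.1 - p.2)) (volume.prod volume) :=
  hh.convolution_integrand (ContinuousLinearMap.mul ℂ ℂ) hq

lemma aux_fubini (φ h g : ℝ → ℂ) (hφ : Continuous φ) (M : ℝ) (hM : ∀ x, ‖φ x‖ ≤ M)
    (hh : Integrable h) (hg : Integrable g) :
    ∫ s, (∫ t, φ (t + s) * h t) * g s = ∫ x, φ x * ∫ t, h t * g (x - t) := by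
  have e1 : ∀ x, φ x * ∫ t, h t * g (x - t) = ∫ t, φ x * (h t * g (x - t)) := fun x =>
    (integral_const_mul _ _).symm
  simp_rw [e1]
  rw [integral_integral_swap
    (f := fun x t => φ x * (h t * g (x - t)))]
  swap
  · exact (aux_conv_integrable h g hh hg).bdd_mul
      (hφ.comp continuous_fst).aestronglyMeasurable (Eventually.of_forall fun p => hM p.1)
  have e2 : ∀ t, ∫ x, φ x * (h t * g (x - t)) = ∫ s, φ (t + s) * h t * g s := by
    intro t
    rw [← integral_add_right_eq_self (fun x => φ x * (h t * g (x - t))) t]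
    refine integral_congr_ae (Eventually.of_forall fun s => ?_)
    change φ (s + t) * (h t * g (s + t - t)) = φ (t + s) * h t * g s
    rw [add_sub_cancel_right, add_comm s t]
    ring
  simp_rw [e2, ← integral_mul_const]
  refine integral_integral_swap (f := fun s t => φ (t + s) * h t * g s) ?_
  have : Integrable (fun p : ℝ × ℝ => g p.1 * h p.2) (volume.prod volume) := hg.mul_prod hh
  have h2 := this.bdd_mul (c := M) (f := fun p : ℝ × ℝ => φ (p.2 + p.1))
    (Continuous.aestronglyMeasurable (by fun_prop)) (Eventually.of_forall fun p => hM _)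
  refine h2.congr (Eventually.of_forall fun p => ?_)
  simp only [Function.uncurry]
  ring

lemma aux_repr {μ : ComplexMeasure ℝ} (hμ : ConcOn μ (Ico 0 1))
    {D : Volterra →L[ℂ] Volterra} (hD : IsDmu μ D) (g : ℝ → ℂ) (hg : Integrable g)
    (hgμ : ∀ G : ℝ → ℂ, Continuous G → (∃ M, ∀ x, ‖G x‖ ≤ M) → cInt μ G = ∫ x, G x * g x)
    (f : Volterra) :
    (D f : ℝ → ℂ) =ᵐ[volume.restrict (Ico (0:ℝ) 1)] fun x => ∫ t, extH f t * g (x - t) := by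
  set k : ℝ → ℂ := fun x => ∫ t, extH f t * g (x - t) with hk
  have hki : Integrable k := (aux_conv_integrable _ g (extH_integrable f) hg).integral_prod_left
  have hDi := L1.integrable_coeFn (D f)
  have hDi' : Integrable ((Ico (0:ℝ) 1).indicator (D f : ℝ → ℂ)) := by
    rwa [integrable_indicator_iff measurableSet_Ico]
  have key := (isOpen_Ioo (a := (0:ℝ)) (b := 1)).ae_eq_zero_of_integral_contDiff_smul_eq_zero
    (f := fun x => (Ico (0:ℝ) 1).indicator (D f : ℝ → ℂ) x - k x) (μ := volume)
    ((hDi'.sub hki).locallyIntegrable.locallyIntegrableOn _) (by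
      intro ψ hψ hψc hψs
      set φ : ℝ → ℂ := fun x => (ψ x : ℂ) with hφd
      have hφ : Continuous φ := Complex.continuous_ofReal.comp hψ.continuous
      have h0 : ∀ x, x ∉ Ioo (0:ℝ) 1 → φ x = 0 := by
        intro x hx
        simp only [hφd, Complex.ofReal_eq_zero]
        exact image_eq_zero_of_notMem_tsupport fun h => hx (hψs h)
      obtain ⟨M, hM0, hM⟩ := aux_bdd φ hφ h0
      have e1 := aux_hD hμ hD f φ hφ h0
      rw [hgμ _ (aux_F_cont φ hφ M hM _ (extH_integrable f))
        ⟨_, fun s => aux_F_bdd φ M hM _ (extH_integrable f) s⟩,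
        aux_fubini φ _ g hφ M hM (extH_integrable f) hg,
        ← integral_indicator measurableSet_Ico] at e1
      have e2 : (fun x => ψ x • ((Ico (0:ℝ) 1).indicator (D f : ℝ → ℂ) x - k x)) =
          fun x => φ x * (Ico (0:ℝ) 1).indicator (D f : ℝ → ℂ) x - φ x * k x := by
        funext x; rw [Complex.real_smul, mul_sub]
      rw [e2, integral_sub (hDi'.bdd_mul hφ.aestronglyMeasurable (Eventually.of_forall hM))
        (hki.bdd_mul hφ.aestronglyMeasurable (Eventually.of_forall hM)), sub_eq_zero]
      rw [← e1]
      refine integral_congr_ae (Eventually.of_forall fun x => ?_)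
      by_cases hx : x ∈ Ico (0:ℝ) 1 <;> simp [hx])
  have hmem : ∀ᵐ x ∂(volume.restrict (Ico (0:ℝ) 1)), x ∈ Ioo (0:ℝ) 1 := by
    rw [← restrict_Ioo_eq_restrict_Ico]
    exact ae_restrict_mem measurableSet_Ioo
  filter_upwards [ae_restrict_of_ae key, hmem] with x hx hx'
  have := hx hx'
  rw [indicator_of_mem (Ioo_subset_Ico_self hx')] at this
  exact sub_eq_zero.1 this

/-- kernels giving compact operators -/
def GoodKer (κ : ℝ → ℝ → ℂ) : Prop :=
  Continuous (fun p : ℝ × ℝ => κ p.1 p.2) ∧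
  ∃ T : Volterra →L[ℂ] Volterra, IsCompactOperator T ∧ ∀ f : Volterra,
    (T f : ℝ → ℂ) =ᵐ[volume.restrict (Ico (0:ℝ) 1)] fun x => ∫ t, extH f t * κ x t

lemma extH_mul_integrable (f : Volterra) (φ : ℝ → ℂ) (hφ : Continuous φ) :
    Integrable (fun t => extH f t * φ t) := by
  obtain ⟨M, hM⟩ := isCompact_Icc.exists_bound_of_continuousOn (s := Icc (0:ℝ) 1) hφ.continuousOn
  refine Integrable.mono' ((extH_integrable f).norm.const_mul M)
    ((extH_integrable f).1.mul hφ.aestronglyMeasurable) (Eventually.of_forall fun t => ?_)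
  by_cases ht : t ∈ Ico (0:ℝ) 1
  · rw [norm_mul, mul_comm]; gcongr; exact hM _ (Ico_subset_Icc_self ht)
  · simp [extH, ht]

lemma GoodKer.add {κ κ' : ℝ → ℝ → ℂ} (h : GoodKer κ) (h' : GoodKer κ') :
    GoodKer (fun x t => κ x t + κ' x t) := by
  obtain ⟨c, T, hT, e⟩ := h
  obtain ⟨c', T', hT', e'⟩ := h'
  refine ⟨c.add c', T + T', hT.add hT', fun f => ?_⟩
  have : (T + T') f = T f + T' f := rfl
  rw [this]
  filter_upwards [e f, e' f, Lp.coeFn_add (T f) (T' f)] with x h1 h2 h3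
  rw [h3, Pi.add_apply, h1, h2, ← integral_add]
  · simp_rw [mul_add]
  · exact extH_mul_integrable f _ (c.comp (Continuous.prodMk continuous_const continuous_id))
  · exact extH_mul_integrable f _ (c'.comp (Continuous.prodMk continuous_const continuous_id))

lemma GoodKer.mul {φ ψ : ℝ → ℂ} (hφ : Continuous φ) (hψ : Continuous ψ) :
    GoodKer (fun x t => φ x * ψ t) := by
  refine ⟨by fun_prop, ?_⟩
  obtain ⟨L, hL⟩ := aux_pairing (fun t => (t:ℂ) * ψ t) (by fun_prop)
  have hφi : Integrable φ (volume.restrict (Ico (0:ℝ) 1)) :=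
    (hφ.integrableOn_Icc (a := 0) (b := 1)).mono_set Ico_subset_Icc_self
  refine ⟨L.smulRight (hφi.toL1 φ), ?_, fun f => ?_⟩
  · have h1 : IsCompactOperator L := isCompactOperator_of_locallyCompactSpace_dom L
    exact h1.clm_comp (ContinuousLinearMap.toSpanSingleton ℂ (hφi.toL1 φ))
  · rw [ContinuousLinearMap.smulRight_apply]
    filter_upwards [Lp.coeFn_smul (L f) (hφi.toL1 φ), hφi.coeFn_toL1] with x h1 h2
    rw [h1, Pi.smul_apply, h2, hL, smul_eq_mul, ← integral_mul_const,
      ← integral_indicator measurableSet_Ico]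
    refine integral_congr_ae (Eventually.of_forall fun t => ?_)
    by_cases ht : t ∈ Ico (0:ℝ) 1
    · simp only [extH, ht, indicator_of_mem]; ring
    · simp [extH, ht]

lemma GoodKer.sum {ι : Type} (s : Finset ι) (κ : ι → ℝ → ℝ → ℂ) (h : ∀ i ∈ s, GoodKer (κ i)) :
    GoodKer (fun x t => ∑ i ∈ s, κ i x t) := by
  classical
  induction s using Finset.induction_on with
  | empty =>
    simpa using GoodKer.mul (φ := fun _ => 0) (ψ := fun _ => 0) continuous_const continuous_const
  | insert a s ha ih =>
    simp_rw [Finset.sum_insert ha]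
    exact (h a (by simp)).add (ih fun i hi => h i (by simp [hi]))

lemma GoodKer.poly (c : ℂ) (p : Polynomial ℝ) :
    GoodKer (fun x t => c * ((p.eval (x - t) : ℝ) : ℂ)) := by
  have : (fun x t : ℝ => c * ((p.eval (x - t) : ℝ) : ℂ)) = fun x t : ℝ =>
      ∑ n ∈ Finset.range (p.natDegree + 1), ∑ m ∈ Finset.range (n + 1),
        (c * (p.coeff n : ℂ) * (n.choose m : ℂ) * (x:ℂ) ^ m) * (-(t:ℂ)) ^ (n - m) := by
    funext x t
    rw [Polynomial.eval_eq_sum_range]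
    push_cast
    rw [Finset.mul_sum]
    refine Finset.sum_congr rfl fun n _ => ?_
    rw [sub_eq_add_neg, add_pow, Finset.mul_sum, Finset.mul_sum]
    refine Finset.sum_congr rfl fun m _ => ?_
    ring
  rw [this]
  refine GoodKer.sum _ _ fun n _ => GoodKer.sum _ _ fun m _ => GoodKer.mul ?_ ?_
  · fun_prop
  · fun_prop

lemma aux_close (D T : Volterra →L[ℂ] Volterra) (g q : ℝ → ℂ) (hg : Integrable g)
    (hq : Continuous q) (ε : ℝ) (hε : 0 ≤ ε)
    (hD : ∀ f : Volterra, (D f : ℝ → ℂ) =ᵐ[volume.restrict (Ico (0:ℝ) 1)]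
      fun x => ∫ t, extH f t * g (x - t))
    (hT : ∀ f : Volterra, (T f : ℝ → ℂ) =ᵐ[volume.restrict (Ico (0:ℝ) 1)]
      fun x => ∫ t, extH f t * q (x - t))
    (hgq : ∫ x in Icc (-1:ℝ) 1, ‖g x - q x‖ ≤ ε) : ‖D - T‖ ≤ ε := by
  refine ContinuousLinearMap.opNorm_le_bound _ hε fun f => ?_
  set r : ℝ → ℂ := (Icc (-1:ℝ) 1).indicator (fun x => g x - q x) with hr
  have hri : Integrable r := by
    rw [hr, integrable_indicator_iff measurableSet_Icc]
    exact hg.integrableOn.sub (hq.integrableOn_Icc)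
  have hrn : ∫ x, ‖r x‖ ≤ ε := by
    refine le_trans (le_of_eq ?_) hgq
    rw [← integral_indicator measurableSet_Icc]
    refine integral_congr_ae (Eventually.of_forall fun t => ?_)
    simp only [hr, norm_indicator_eq_indicator_norm]
  have hfi := extH_integrable f
  have hci := aux_conv_integrable _ _ hfi hri
  have hgi := aux_conv_integrable _ _ hfi hg
  have eq1 : ((D f - T f : Volterra) : ℝ → ℂ) =ᵐ[volume.restrict (Ico (0:ℝ) 1)]
      fun x => ∫ t, extH f t * r (x - t) := by
    filter_upwards [Lp.coeFn_sub (D f) (T f), hD f, hT f, ae_restrict_mem measurableSet_Ico,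
      ae_restrict_of_ae hgi.prod_right_ae] with x h1 h2 h3 hx h4
    rw [h1, Pi.sub_apply, h2, h3, ← integral_sub h4
      (extH_mul_integrable f (fun t => q (x - t)) (by fun_prop))]
    refine integral_congr_ae (Eventually.of_forall fun t => ?_)
    by_cases ht : t ∈ Ico (0:ℝ) 1
    · have : x - t ∈ Icc (-1:ℝ) 1 := ⟨by linarith [hx.1, ht.2], by linarith [hx.2, ht.1]⟩
      simp only [hr, indicator_of_mem this]; ring
    · simp [extH, ht]
  have : (D - T) f = D f - T f := rfl
  rw [this, L1.norm_eq_integral_norm]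
  have hni : Integrable (fun x => ∫ t, ‖extH f t * r (x - t)‖) := hci.norm.integral_prod_left
  calc ∫ x in Ico (0:ℝ) 1, ‖((D f - T f : Volterra) : ℝ → ℂ) x‖
      ≤ ∫ x in Ico (0:ℝ) 1, ∫ t, ‖extH f t * r (x - t)‖ := by
        refine integral_mono_ae (L1.integrable_coeFn _).norm hni.restrict ?_
        filter_upwards [eq1] with x hx
        rw [hx]
        exact norm_integral_le_integral_norm _
    _ ≤ ∫ x, ∫ t, ‖extH f t * r (x - t)‖ :=
        setIntegral_le_integral hni (Eventually.of_forall fun x =>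
          integral_nonneg fun t => norm_nonneg _)
    _ = (∫ t, ‖extH f t‖) * ∫ x, ‖r x‖ := by
        rw [integral_integral_swap (f := fun x t => ‖extH f t * r (x - t)‖) hci.norm,
          ← integral_mul_const]
        refine integral_congr_ae (Eventually.of_forall fun t => ?_)
        simp only [norm_mul]
        rw [integral_const_mul, integral_sub_right_eq_self (fun x => ‖r x‖) t]
    _ ≤ ‖f‖ * ε := by
        gcongr
        exact extH_norm_le f
    _ = ε * ‖f‖ := mul_comm _ _

lemma aux_approx (g : ℝ → ℂ) (hg : Integrable g) (ε : ℝ) (hε : 0 < ε) :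
    ∃ p1 p2 : Polynomial ℝ, ∫ x in Icc (-1:ℝ) 1,
      ‖g x - ((1:ℂ) * ((p1.eval x : ℝ) : ℂ) + Complex.I * ((p2.eval x : ℝ) : ℂ))‖ ≤ ε := by
  obtain ⟨c, -, hc1, hc2, hc3⟩ := hg.exists_hasCompactSupport_integral_sub_le (half_pos hε)
  have h8 : 0 < ε / 8 := by positivity
  obtain ⟨p1, h1⟩ := exists_polynomial_near_of_continuousOn (-1) 1 (fun x => (c x).re)
    (Complex.continuous_re.comp hc2).continuousOn (ε / 8) h8
  obtain ⟨p2, h2⟩ := exists_polynomial_near_of_continuousOn (-1) 1 (fun x => (c x).im)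
    (Complex.continuous_im.comp hc2).continuousOn (ε / 8) h8
  refine ⟨p1, p2, ?_⟩
  set q : ℝ → ℂ := fun x => (1:ℂ) * ((p1.eval x : ℝ) : ℂ) + Complex.I * ((p2.eval x : ℝ) : ℂ)
    with hq
  have hqc : Continuous q := by
    have a1 := p1.continuous
    have a2 := p2.continuous
    fun_prop
  have hcq : ∀ x ∈ Icc (-1:ℝ) 1, ‖c x - q x‖ ≤ ε / 4 := by
    intro x hx
    refine (Complex.norm_le_abs_re_add_abs_im _).trans ?_
    have b1 := h1 x hx
    have b2 := h2 x hx
    rw [abs_sub_comm] at b1 b2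
    simp only [hq, Complex.sub_re, Complex.sub_im, Complex.add_re, Complex.add_im, one_mul,
      Complex.ofReal_re, Complex.ofReal_im, Complex.mul_re, Complex.mul_im, Complex.I_re,
      Complex.I_im]
    simp only [zero_mul, mul_zero, sub_zero, add_zero, zero_add]
    linarith
  have i1 : IntegrableOn (fun x => ‖g x - c x‖) (Icc (-1:ℝ) 1) := (hg.sub hc3).norm.integrableOn
  have i2 : IntegrableOn (fun _ : ℝ => ε / 4) (Icc (-1:ℝ) 1) :=
    continuous_const.integrableOn_Icc
  have i3 : IntegrableOn (fun x => ‖g x - q x‖) (Icc (-1:ℝ) 1) :=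
    (hg.integrableOn.sub hqc.integrableOn_Icc).norm
  calc ∫ x in Icc (-1:ℝ) 1, ‖g x - q x‖
      ≤ ∫ x in Icc (-1:ℝ) 1, (‖g x - c x‖ + ε / 4) := by
        refine setIntegral_mono_on i3 (i1.add i2) measurableSet_Icc fun x hx => ?_
        have := norm_sub_le_norm_sub_add_norm_sub (g x) (c x) (q x)
        linarith [hcq x hx]
    _ = (∫ x in Icc (-1:ℝ) 1, ‖g x - c x‖) + ∫ x in Icc (-1:ℝ) 1, ε / 4 := integral_add i1 i2
    _ ≤ ε / 2 + ε / 2 := by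
        gcongr
        · exact (setIntegral_le_integral (hg.sub hc3).norm
            (Eventually.of_forall fun x => norm_nonneg _)).trans hc1
        · simp; linarith
    _ = ε := by ring

lemma aux_compact {μ : ComplexMeasure ℝ} (hμ : ConcOn μ (Ico 0 1))
    {D : Volterra →L[ℂ] Volterra} (hD : IsDmu μ D)
    (h : ∀ E : Set ℝ, MeasurableSet E → volume E = 0 → μ E = 0) : IsCompactOperator D := by
  obtain ⟨g, hg, hgμ⟩ := aux_density μ h
  have hrep := aux_repr hμ hD g hg hgμ
  have hcl : IsClosed {T : Volterra →L[ℂ] Volterra | IsCompactOperator T} :=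
    isClosed_setOfPred_isCompactOperator
  suffices D ∈ closure {T : Volterra →L[ℂ] Volterra | IsCompactOperator T} by
    rw [hcl.closure_eq] at this; exact this
  rw [Metric.mem_closure_iff]
  intro ε hε
  obtain ⟨p1, p2, hp⟩ := aux_approx g hg (ε / 2) (by positivity)
  obtain ⟨-, T, hT, hTe⟩ := (GoodKer.poly 1 p1).add (GoodKer.poly Complex.I p2)
  refine ⟨T, hT, ?_⟩
  rw [dist_eq_norm]
  have hc : Continuous (fun x : ℝ =>
      (1:ℂ) * ((p1.eval x : ℝ) : ℂ) + Complex.I * ((p2.eval x : ℝ) : ℂ)) := by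
    have a1 := p1.continuous
    have a2 := p2.continuous
    fun_prop
  have := aux_close D T g _ hg hc (ε / 2) (by positivity) hrep hTe hp
  linarith


lemma aux_unique (ν1 ν2 : Measure ℝ) [IsFiniteMeasure ν1] [IsFiniteMeasure ν2] (k : ℝ → ℝ)
    (hk : Integrable k (volume.restrict (Ico (0:ℝ) 1)))
    (h : ∀ φ : ℝ → ℝ, Continuous φ → (∀ x, x ∉ Ioo (0:ℝ) 1 → φ x = 0) →
      (∫ x, φ x ∂ν1) - ∫ x, φ x ∂ν2 = ∫ x in Ico (0:ℝ) 1, φ x * k x)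
    (E : Set ℝ) (hE : MeasurableSet E) (hE0 : E ⊆ Ioo 0 1) (hEn : volume E = 0) :
    ν1 E = ν2 E := by
  set lam := volume.restrict (Ico (0:ℝ) 1) with hlam
  set χ : ℝ → ℝ := fun x => max 0 (min x (1 - x)) with hχ
  have hχc : Continuous χ := by fun_prop
  have hχ0 : ∀ x, 0 ≤ χ x := fun x => le_max_left _ _
  have hχ1 : ∀ x, χ x ≤ 1 := by
    intro x
    refine max_le zero_le_one ?_
    rcases le_total x 1 with h | h
    · exact (min_le_left _ _).trans h
    · exact (min_le_right _ _).trans (by linarith)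
  have hχz : ∀ x, x ∉ Ioo (0:ℝ) 1 → χ x = 0 := by
    intro x hx
    refine max_eq_left ?_
    by_contra hc
    push Not at hc
    rw [lt_min_iff] at hc
    exact hx ⟨hc.1, by linarith [hc.2]⟩
  have hχp : ∀ x ∈ Ioo (0:ℝ) 1, 0 < χ x := by
    intro x hx
    exact lt_max_of_lt_right (lt_min hx.1 (by linarith [hx.2]))
  set d1 := lam.withDensity (fun x => ENNReal.ofReal (-k x)) with hd1
  set d2 := lam.withDensity (fun x => ENNReal.ofReal (k x)) with hd2
  haveI : IsFiniteMeasure d1 := isFiniteMeasure_withDensity_ofReal hk.neg.2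
  haveI : IsFiniteMeasure d2 := isFiniteMeasure_withDensity_ofReal hk.2
  have hbi : ∀ (ρ : Measure ℝ) [IsFiniteMeasure ρ] (ψ : ℝ → ℝ), Continuous ψ →
      (∃ M, ∀ x, ‖ψ x‖ ≤ M) → Integrable ψ ρ := by
    intro ρ _ ψ hψ ⟨M, hM⟩
    exact (integrable_const M).mono' hψ.aestronglyMeasurable (Eventually.of_forall hM)
  have hfin : ∀ (ρ : Measure ℝ) [IsFiniteMeasure ρ],
      IsFiniteMeasure (ρ.withDensity fun x => ENNReal.ofReal (χ x)) := by
    intro ρ _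
    exact isFiniteMeasure_withDensity_ofReal (hbi ρ χ hχc ⟨1, fun x => by
      rw [Real.norm_of_nonneg (hχ0 x)]; exact hχ1 x⟩).2
  haveI := hfin (ν1 + d1)
  haveI := hfin (ν2 + d2)
  have hintg : ∀ (ρ : Measure ℝ) (φ : ℝ → ℝ),
      ∫ x, φ x ∂(ρ.withDensity fun x => ENNReal.ofReal (χ x)) = ∫ x, χ x * φ x ∂ρ := by
    intro ρ φ
    rw [integral_withDensity_eq_integral_toReal_smul hχc.measurable.ennreal_ofReal
      (Eventually.of_forall fun x => ENNReal.ofReal_lt_top)]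
    simp [ENNReal.toReal_ofReal (hχ0 _)]
  have hσ : (ν1 + d1).withDensity (fun x => ENNReal.ofReal (χ x)) =
      (ν2 + d2).withDensity (fun x => ENNReal.ofReal (χ x)) := by
    refine ext_of_forall_integral_eq_of_IsFiniteMeasure fun φ => ?_
    rw [hintg, hintg]
    set ψ : ℝ → ℝ := fun x => χ x * φ x with hψ
    have hψc : Continuous ψ := hχc.mul φ.continuous
    have hψb : ∀ x, ‖ψ x‖ ≤ ‖φ‖ := by
      intro x
      rw [hψ, norm_mul, Real.norm_of_nonneg (hχ0 x)]
      exact (mul_le_of_le_one_left (norm_nonneg _) (hχ1 x)).trans (φ.norm_coe_le_norm x)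
    have hψz : ∀ x, x ∉ Ioo (0:ℝ) 1 → ψ x = 0 := fun x hx => by simp [hψ, hχz x hx]
    have e := h ψ hψc hψz
    rw [integral_add_measure (hbi _ _ hψc ⟨_, hψb⟩) (hbi _ _ hψc ⟨_, hψb⟩),
      integral_add_measure (hbi _ _ hψc ⟨_, hψb⟩) (hbi _ _ hψc ⟨_, hψb⟩)]
    have e1 : ∫ x, ψ x ∂d1 = ∫ x, max (-k x) 0 * ψ x ∂lam := by
      rw [hd1, integral_withDensity_eq_integral_toReal_smul₀
        (f := fun x => ENNReal.ofReal (-k x)) hk.neg.1.aemeasurable.ennreal_ofReal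
        (Eventually.of_forall fun x => ENNReal.ofReal_lt_top)]
      simp [ENNReal.toReal_ofReal']
    have e2 : ∫ x, ψ x ∂d2 = ∫ x, max (k x) 0 * ψ x ∂lam := by
      rw [hd2, integral_withDensity_eq_integral_toReal_smul₀
        hk.1.aemeasurable.ennreal_ofReal
        (Eventually.of_forall fun x => ENNReal.ofReal_lt_top)]
      simp [ENNReal.toReal_ofReal']
    have i1 : Integrable (fun x => max (-k x) 0 * ψ x) lam :=
      hk.neg_part.mul_bdd hψc.aestronglyMeasurable (Eventually.of_forall hψb)
    have i2 : Integrable (fun x => max (k x) 0 * ψ x) lam :=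
      hk.pos_part.mul_bdd hψc.aestronglyMeasurable (Eventually.of_forall hψb)
    have e3 : ∫ x, ψ x * k x ∂lam =
        (∫ x, max (k x) 0 * ψ x ∂lam) - ∫ x, max (-k x) 0 * ψ x ∂lam := by
      rw [← integral_sub i2 i1]
      refine integral_congr_ae (Eventually.of_forall fun x => ?_)
      simp only
      rcases le_total (k x) 0 with hx | hx
      · rw [max_eq_right hx, max_eq_left (by linarith)]; ring
      · rw [max_eq_left hx, max_eq_right (by linarith)]; ring
    rw [e1, e2]
    linarith
  have hrec : ∀ ρ : Measure ℝ,
      (((ρ.withDensity fun x => ENNReal.ofReal (χ x)).restrict E).withDensity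
        fun x => (ENNReal.ofReal (χ x))⁻¹) = ρ.restrict E := by
    intro ρ
    rw [restrict_withDensity hE]
    refine withDensity_inv_same hχc.measurable.ennreal_ofReal ?_
      (Eventually.of_forall fun x => ENNReal.ofReal_ne_top)
    filter_upwards [ae_restrict_mem hE] with x hx
    simpa using hχp x (hE0 hx)
  have hres : (ν1 + d1).restrict E = (ν2 + d2).restrict E := by
    rw [← hrec (ν1 + d1), ← hrec (ν2 + d2), hσ]
  have hz : lam E = 0 := by
    rw [hlam]; exact Measure.absolutelyContinuous_of_le Measure.restrict_le_self hEn
  have z1 : d1 E = 0 := withDensity_absolutelyContinuous _ _ hz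
  have z2 : d2 E = 0 := withDensity_absolutelyContinuous _ _ hz
  have := congrArg (fun m : Measure ℝ => m univ) hres
  simpa [z1, z2] using this

/-- approximate identity at `a` -/
def apx (a ε : ℝ) : Volterra :=
  indicatorConstLp 1 (measurableSet_Ico (a := a) (b := a + ε))
    (measure_ne_top (volume.restrict (Ico (0:ℝ) 1)) _) ((ε⁻¹ : ℝ) : ℂ)

lemma apx_norm (a ε : ℝ) (hε : 0 < ε) : ‖apx a ε‖ ≤ 1 := by
  unfold apx
  rw [norm_indicatorConstLp one_ne_zero ENNReal.one_ne_top]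
  simp only [ENNReal.toReal_one, div_one, Real.rpow_one, Complex.norm_real]
  rw [Real.norm_of_nonneg (inv_nonneg.2 hε.le)]
  have : (volume.restrict (Ico (0:ℝ) 1)).real (Ico a (a + ε)) ≤ ε := by
    refine ENNReal.toReal_le_of_le_ofReal hε.le ?_
    refine (Measure.restrict_apply_le _ _).trans ?_
    simp
  calc ε⁻¹ * _ ≤ ε⁻¹ * ε := by gcongr
    _ = 1 := inv_mul_cancel₀ hε.ne'

lemma apx_integral (a ε : ℝ) (ha : 0 < a) (hε : 0 < ε) (hε1 : a + ε ≤ 1) (φ : ℝ → ℂ) (s : ℝ) :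
    ∫ t, φ (t + s) * extH (apx a ε) t =
      ε⁻¹ • ∫ t in a..(a + ε), φ (t + s) * (t : ℂ) := by
  rw [intervalIntegral.integral_of_le (by linarith), ← integral_Ico_eq_integral_Ioc,
    ← integral_smul, ← integral_indicator measurableSet_Ico]
  have h1 : ∀ᵐ t ∂(volume : Measure ℝ), t ∈ Ico (0:ℝ) 1 → (apx a ε : ℝ → ℂ) t =
      (Ico a (a + ε)).indicator (fun _ => ((ε⁻¹ : ℝ) : ℂ)) t := by
    rw [← ae_restrict_iff' measurableSet_Ico]
    exact indicatorConstLp_coeFn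
  refine integral_congr_ae ?_
  filter_upwards [h1] with t ht
  by_cases h2 : t ∈ Ico a (a + ε)
  · have h3 : t ∈ Ico (0:ℝ) 1 := ⟨by linarith [h2.1], by linarith [h2.2]⟩
    simp only [extH, indicator_of_mem h3, ht h3, indicator_of_mem h2, Complex.real_smul]
    ring
  · rw [indicator_of_notMem h2]
    by_cases h3 : t ∈ Ico (0:ℝ) 1
    · simp [extH, indicator_of_mem h3, ht h3, indicator_of_notMem h2]
    · simp [extH, h3]

lemma aux_lim_pt (a : ℝ) (φ : ℝ → ℂ) (hφ : Continuous φ) (s : ℝ) :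
    Tendsto (fun ε : ℝ => ε⁻¹ • ∫ t in a..(a + ε), φ (t + s) * (t : ℂ)) (𝓝[>] 0)
      (𝓝 (φ (a + s) * (a : ℂ))) := by
  have hc : Continuous (fun t : ℝ => φ (t + s) * (t : ℂ)) := by fun_prop
  have := (hc.integral_hasStrictDerivAt a a).hasDerivAt.tendsto_slope_zero_right
  simpa using this

lemma aux_lim_meas (ν : Measure ℝ) [IsFiniteMeasure ν] (a : ℝ) (ha : 0 < a) (ha1 : a < 1)
    (φ : ℝ → ℂ) (hφ : Continuous φ) (h0 : ∀ x, x ∉ Ioo (0:ℝ) 1 → φ x = 0)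
    (e : ℕ → ℝ) (he : ∀ n, 0 < e n ∧ a + e n ≤ 1) (het : Tendsto e atTop (𝓝[>] 0)) :
    Tendsto (fun n => ∫ s, (∫ t, φ (t + s) * extH (apx a (e n)) t) ∂ν) atTop
      (𝓝 (∫ s, φ (a + s) * (a : ℂ) ∂ν)) := by
  obtain ⟨M, hM0, hM⟩ := aux_bdd φ hφ h0
  refine tendsto_integral_of_dominated_convergence (fun _ => M) ?_ (integrable_const _) ?_ ?_
  · intro n
    exact (aux_F_cont φ hφ M hM _ (extH_integrable _)).aestronglyMeasurable
  · intro n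
    refine Eventually.of_forall fun s => ?_
    refine (aux_F_bdd φ M hM _ (extH_integrable _) s).trans ?_
    exact mul_le_of_le_one_right hM0 ((extH_norm_le _).trans (apx_norm _ _ (he n).1))
  · refine Eventually.of_forall fun s => ?_
    have := (aux_lim_pt a φ hφ s).comp het
    refine this.congr fun n => ?_
    exact (apx_integral a (e n) ha (he n).1 (he n).2 φ s).symm

lemma aux_cluster {μ : ComplexMeasure ℝ} (hμ : ConcOn μ (Ico 0 1))
    {D : Volterra →L[ℂ] Volterra} (hD : IsDmu μ D)
    (hK : IsCompact (closure
        (⇑(toWeakSpace ℂ Volterra) '' (⇑D '' Metric.closedBall 0 1))))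
    (a : ℝ) (ha : 0 < a) (ha1 : a < 1) :
    ∃ h : Volterra, ∀ φ : ℝ → ℂ, Continuous φ → (∀ x, x ∉ Ioo (0:ℝ) 1 → φ x = 0) →
      ∫ t in Ico (0:ℝ) 1, φ t * (h : ℝ → ℂ) t = cInt μ fun s => φ (a + s) * (a : ℂ) := by
  set e : ℕ → ℝ := fun n => (1 - a) * (1 / ((n : ℝ) + 1)) with hed
  have he : ∀ n, 0 < e n ∧ a + e n ≤ 1 := by
    intro n
    have h1 : 0 < 1 / ((n : ℝ) + 1) := by positivity
    have h2 : 1 / ((n : ℝ) + 1) ≤ 1 := by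
      rw [div_le_one (by positivity)]
      linarith [(Nat.cast_nonneg n : (0:ℝ) ≤ n)]
    have h3 : 0 < 1 - a := by linarith
    refine ⟨by positivity, ?_⟩
    have : (1 - a) * (1 / ((n : ℝ) + 1)) ≤ 1 - a := mul_le_of_le_one_right h3.le h2
    simp only [hed]; linarith
  have het : Tendsto e atTop (𝓝[>] 0) := by
    refine tendsto_nhdsWithin_iff.2 ⟨?_, Eventually.of_forall fun n => (he n).1⟩
    simpa [hed] using (tendsto_one_div_add_atTop_nhds_zero_nat (𝕜 := ℝ)).const_mul (1 - a)
  set u : ℕ → WeakSpace ℂ Volterra := fun n => toWeakSpace ℂ Volterra (D (apx a (e n))) with hu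
  have hmem : ∀ n, u n ∈ closure
      (⇑(toWeakSpace ℂ Volterra) '' (⇑D '' Metric.closedBall 0 1)) := by
    intro n
    refine subset_closure ⟨_, ⟨apx a (e n), ?_, rfl⟩, rfl⟩
    simpa using apx_norm a (e n) (he n).1
  obtain ⟨h', -, hh'⟩ := hK.ultrafilter_le_nhds (Ultrafilter.map u (hyperfilter ℕ)) (by
    rw [Ultrafilter.coe_map, le_principal_iff]
    exact mem_map.2 (Eventually.of_forall hmem))
  refine ⟨(toWeakSpace ℂ Volterra).symm h', fun φ hφ h0 => ?_⟩
  obtain ⟨L, hL⟩ := aux_pairing φ hφ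
  have hLc : Continuous fun x : WeakSpace ℂ Volterra => L ((toWeakSpace ℂ Volterra).symm x) :=
    WeakBilin.eval_continuous (topDualPairing ℂ Volterra).flip L
  have t1 : Tendsto (fun n => L (D (apx a (e n)))) (hyperfilter ℕ : Filter ℕ)
      (𝓝 (L ((toWeakSpace ℂ Volterra).symm h'))) := by
    have hu' : Tendsto u (hyperfilter ℕ : Filter ℕ) (𝓝 h') := hh'
    exact (hLc.tendsto h').comp hu'
  have t2 : Tendsto (fun n => L (D (apx a (e n)))) atTop
      (𝓝 (cInt μ fun s => φ (a + s) * (a : ℂ))) := by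
    have eq : (fun n => L (D (apx a (e n)))) =
        fun n => cInt μ fun s => ∫ t, φ (t + s) * extH (apx a (e n)) t := by
      funext n
      rw [hL, aux_hD hμ hD _ φ hφ h0]
    rw [eq]
    unfold cInt
    exact ((aux_lim_meas _ a ha ha1 φ hφ h0 e he het).sub
      (aux_lim_meas _ a ha ha1 φ hφ h0 e he het)).add
      (((aux_lim_meas _ a ha ha1 φ hφ h0 e he het).sub
      (aux_lim_meas _ a ha ha1 φ hφ h0 e he het)).const_mul _)
  have t3 := t2.mono_left (Nat.hyperfilter_le_atTop)
  rw [← hL]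
  exact tendsto_nhds_unique t1 t3

lemma aux_part (ν1 ν2 : Measure ℝ) [IsFiniteMeasure ν1] [IsFiniteMeasure ν2] (a : ℝ)
    (ha : 0 < a) (k : ℝ → ℝ) (hk : Integrable k (volume.restrict (Ico (0:ℝ) 1)))
    (h : ∀ φ : ℝ → ℝ, Continuous φ → (∀ x, x ∉ Ioo (0:ℝ) 1 → φ x = 0) →
      ((∫ s, φ (a + s) ∂ν1) - ∫ s, φ (a + s) ∂ν2) * a = ∫ x in Ico (0:ℝ) 1, φ x * k x)
    (B : Set ℝ) (hB : MeasurableSet B) (hB0 : B ⊆ Ico 0 (1 - a)) (hBn : volume B = 0) :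
    ν1 B = ν2 B := by
  have hm : Measurable (fun s : ℝ => a + s) := by fun_prop
  have hm' : Measurable (fun s : ℝ => s - a) := by fun_prop
  have key := aux_unique (ν1.map (fun s => a + s)) (ν2.map (fun s => a + s)) (fun x => k x * a⁻¹)
    (hk.mul_const _) (by
      intro φ hφ h0
      rw [integral_map hm.aemeasurable hφ.aestronglyMeasurable,
        integral_map hm.aemeasurable hφ.aestronglyMeasurable]
      have := h φ hφ h0
      simp_rw [← mul_assoc]
      rw [integral_mul_const, ← this]
      field_simp) ((fun s => s - a) ⁻¹' B) (hm' hB) (by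
      intro x hx
      have := hB0 hx
      exact ⟨by linarith [this.1], by linarith [this.2]⟩) (by
      rw [(measurePreserving_sub_right volume a).measure_preimage hB.nullMeasurableSet]; exact hBn)
  rw [Measure.map_apply hm (hm' hB), Measure.map_apply hm (hm' hB)] at key
  simpa [← preimage_comp, Function.comp_def] using key

lemma aux_ac {μ : ComplexMeasure ℝ} (hμ : ConcOn μ (Ico 0 1))
    {D : Volterra →L[ℂ] Volterra} (hD : IsDmu μ D)
    (hK : IsCompact (closure
        (⇑(toWeakSpace ℂ Volterra) '' (⇑D '' Metric.closedBall 0 1))))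
    (a : ℝ) (ha : 0 < a) (ha1 : a < 1)
    (B : Set ℝ) (hB : MeasurableSet B) (hB0 : B ⊆ Ico 0 (1 - a)) (hBn : volume B = 0) :
    μ B = 0 := by
  obtain ⟨h, hh⟩ := aux_cluster hμ hD hK a ha ha1
  have hi := L1.integrable_coeFn h
  have hval : ∀ φ : ℝ → ℝ, Continuous φ → (∀ x, x ∉ Ioo (0:ℝ) 1 → φ x = 0) →
      (((∫ s, φ (a + s) ∂μ.re.toJordanDecomposition.posPart) -
        ∫ s, φ (a + s) ∂μ.re.toJordanDecomposition.negPart) * a =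
          ∫ x in Ico (0:ℝ) 1, φ x * ((h : ℝ → ℂ) x).re) ∧
      (((∫ s, φ (a + s) ∂μ.im.toJordanDecomposition.posPart) -
        ∫ s, φ (a + s) ∂μ.im.toJordanDecomposition.negPart) * a =
          ∫ x in Ico (0:ℝ) 1, φ x * ((h : ℝ → ℂ) x).im) := by
    intro φ hφ h0
    have hφ' : Continuous (fun x => (φ x : ℂ)) := Complex.continuous_ofReal.comp hφ
    have h0' : ∀ x, x ∉ Ioo (0:ℝ) 1 → (φ x : ℂ) = 0 := fun x hx => by simp [h0 x hx]
    obtain ⟨M, hM0, hM⟩ := aux_bdd _ hφ' h0'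
    have e := hh (fun x => (φ x : ℂ)) hφ' h0'
    have hI : Integrable (fun t => (φ t : ℂ) * (h : ℝ → ℂ) t)
        (volume.restrict (Ico (0:ℝ) 1)) :=
      hi.bdd_mul hφ'.aestronglyMeasurable (Eventually.of_forall hM)
    unfold cInt at e
    simp_rw [← Complex.ofReal_mul] at e
    simp only [integral_complex_ofReal] at e
    rw [integral_mul_const, integral_mul_const, integral_mul_const, integral_mul_const] at e
    have r := congrArg Complex.re e
    have i := congrArg Complex.im e
    have r1 : (∫ t in Ico (0:ℝ) 1, (φ t : ℂ) * (h : ℝ → ℂ) t).re =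
        ∫ x in Ico (0:ℝ) 1, φ x * ((h : ℝ → ℂ) x).re := by
      have := integral_re hI
      simp only [RCLike.re_to_complex, Complex.re_ofReal_mul] at this
      exact this.symm
    have i1 : (∫ t in Ico (0:ℝ) 1, (φ t : ℂ) * (h : ℝ → ℂ) t).im =
        ∫ x in Ico (0:ℝ) 1, φ x * ((h : ℝ → ℂ) x).im := by
      have := integral_im hI
      simp only [RCLike.im_to_complex, Complex.im_ofReal_mul] at this
      exact this.symm
    rw [r1] at r
    rw [i1] at i
    rw [r, i]
    constructor <;> simp <;> ring
  have p1 := aux_part _ _ a ha _ hi.re (fun φ hφ h0 => (hval φ hφ h0).1) B hB hB0 hBn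
  have p2 := aux_part _ _ a ha _ hi.im (fun φ hφ h0 => (hval φ hφ h0).2) B hB hB0 hBn
  apply Complex.ext
  · change μ.re B = 0
    rw [SignedMeasure.apply_eq_posPart_real_sub_negPart_real _ hB, measureReal_def,
      measureReal_def, p1, sub_self]
  · change μ.im B = 0
    rw [SignedMeasure.apply_eq_posPart_real_sub_negPart_real _ hB, measureReal_def,
      measureReal_def, p2, sub_self]

lemma aux_ac_all {μ : ComplexMeasure ℝ} (hμ : ConcOn μ (Ico 0 1))
    {D : Volterra →L[ℂ] Volterra} (hD : IsDmu μ D)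
    (hK : IsCompact (closure
        (⇑(toWeakSpace ℂ Volterra) '' (⇑D '' Metric.closedBall 0 1))))
    (A : Set ℝ) (hA : MeasurableSet A) (hAn : volume A = 0) : μ A = 0 := by
  have hpos : ∀ n : ℕ, (0:ℝ) < 1 / ((n:ℝ) + 2) := fun n => by positivity
  have hlt : ∀ n : ℕ, 1 / ((n:ℝ) + 2) < 1 := fun n => by
    rw [div_lt_one (by positivity)]
    linarith [(Nat.cast_nonneg n : (0:ℝ) ≤ n)]
  have hBm : ∀ n : ℕ, MeasurableSet (A ∩ Ico (0:ℝ) (1 - 1 / ((n:ℝ) + 2))) :=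
    fun n => hA.inter measurableSet_Ico
  have hB0 : ∀ n : ℕ, μ (A ∩ Ico (0:ℝ) (1 - 1 / ((n:ℝ) + 2))) = 0 := fun n =>
    aux_ac hμ hD hK _ (hpos n) (hlt n) _ (hBm n) inter_subset_right
      (measure_mono_null inter_subset_left hAn)
  have hmono : Monotone (fun n : ℕ => A ∩ Ico (0:ℝ) (1 - 1 / ((n:ℝ) + 2))) := by
    intro m n hmn
    refine inter_subset_inter_right _ (Ico_subset_Ico_right ?_)
    have h1 : (m:ℝ) ≤ n := by exact_mod_cast hmn
    have : 1 / ((n:ℝ) + 2) ≤ 1 / ((m:ℝ) + 2) :=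
      one_div_le_one_div_of_le (by positivity) (by linarith)
    linarith
  have hU : (⋃ n : ℕ, A ∩ Ico (0:ℝ) (1 - 1 / ((n:ℝ) + 2))) = A ∩ Ico 0 1 := by
    rw [← inter_iUnion]
    congr 1
    ext x
    simp only [mem_iUnion, mem_Ico]
    constructor
    · rintro ⟨n, h1, h2⟩
      exact ⟨h1, by linarith [hpos n]⟩
    · rintro ⟨h1, h2⟩
      obtain ⟨n, hn⟩ := exists_nat_one_div_lt (show (0:ℝ) < 1 - x by linarith)
      refine ⟨n, h1, ?_⟩
      have : 1 / ((n:ℝ) + 2) ≤ 1 / ((n:ℝ) + 1) :=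
        one_div_le_one_div_of_le (by positivity) (by linarith)
      linarith
  have hl := VectorMeasure.tendsto_vectorMeasure_iUnion_atTop_nat (v := μ) hmono hBm
  rw [hU] at hl
  have h1 : μ (A ∩ Ico 0 1) = 0 := by
    refine tendsto_nhds_unique hl ?_
    simp only [Function.comp_def, hB0]
    exact tendsto_const_nhds
  have h2 : μ (A \ Ico 0 1) = 0 :=
    hμ _ (hA.diff measurableSet_Ico) (fun x hx => hx.2)
  have h3 := VectorMeasure.of_union (v := μ) (A := A ∩ Ico 0 1) (B := A \ Ico 0 1)
    (disjoint_sdiff_inter.symm) (hA.inter measurableSet_Ico) (hA.diff measurableSet_Ico)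
  rw [inter_union_sdiff, h1, h2, add_zero] at h3
  exact h3

lemma aux_weak {D : Volterra →L[ℂ] Volterra} (hc : IsCompactOperator (⇑D)) :
    IsCompact (closure (⇑(toWeakSpace ℂ Volterra) '' (⇑D '' Metric.closedBall 0 1))) := by
  have h1 : IsCompact (closure (⇑D '' Metric.closedBall 0 1)) :=
    IsCompactOperator.isCompact_closure_image_closedBall (f := D.toLinearMap) hc 1
  have h2 : IsCompact (⇑(toWeakSpaceCLM ℂ Volterra) '' closure (⇑D '' Metric.closedBall 0 1)) :=
    h1.image (toWeakSpaceCLM ℂ Volterra).continuous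
  refine h2.of_isClosed_subset isClosed_closure (closure_minimal ?_ h2.isClosed)
  exact image_mono subset_closure

lemma aux_tend (μ : ComplexMeasure ℝ) :
    Tendsto (fun t : ℝ => t * (cTV μ (Ico 0 (1 - t))).toReal)
      (nhdsWithin 0 (Ioi 0)) (nhds 0) := by
  have hfin : IsFiniteMeasure (cTV μ) := by
    unfold cTV SignedMeasure.totalVariation
    infer_instance
  have hz : Tendsto (fun t : ℝ => t * (cTV μ univ).toReal) (nhdsWithin 0 (Ioi 0)) (nhds 0) := by
    have h : Continuous (fun t : ℝ => t * (cTV μ univ).toReal) := by fun_prop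
    have h' := h.tendsto 0
    rw [zero_mul] at h'
    exact h'.mono_left nhdsWithin_le_nhds
  refine squeeze_zero' ?_ ?_ hz
  · filter_upwards [self_mem_nhdsWithin] with t ht
    exact mul_nonneg (le_of_lt ht) ENNReal.toReal_nonneg
  · filter_upwards [self_mem_nhdsWithin] with t ht
    exact mul_le_mul_of_nonneg_left
      (ENNReal.toReal_mono (measure_ne_top _ _) (measure_mono (subset_univ _))) (le_of_lt ht)

/-- For a finite complex Borel measure `μ` on `[0,1)` with
`t |μ|([0,1-t))` bounded as `t → 0⁺`, the following are equivalent for the derivation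
`D_μ f = (Xf) * μ` on `L¹[0,1)`:
(a) `D_μ` is compact; (b) `D_μ` is weakly compact;
(c) `μ` is absolutely continuous and `t |μ|([0,1-t)) → 0` as `t → 0⁺`. -/
theorem compact_iff_weakly_compact_iff_ac (μ : ComplexMeasure ℝ)
    (hμc : ConcOn μ (Ico 0 1))
    (hμb : ∃ C δ : ℝ, 0 < δ ∧ ∀ t : ℝ, 0 < t → t < δ →
      t * (cTV μ (Ico 0 (1 - t))).toReal ≤ C)
    (D : Volterra →L[ℂ] Volterra) (hD : IsDmu μ D) :
    (IsCompactOperator (⇑D) ↔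
      ((∀ E : Set ℝ, MeasurableSet E → volume E = 0 → μ E = 0) ∧
        Tendsto (fun t : ℝ => t * (cTV μ (Ico 0 (1 - t))).toReal)
          (nhdsWithin 0 (Ioi 0)) (nhds 0))) ∧
    (IsCompact (closure
        (⇑(toWeakSpace ℂ Volterra) '' (⇑D '' Metric.closedBall 0 1))) ↔
      ((∀ E : Set ℝ, MeasurableSet E → volume E = 0 → μ E = 0) ∧
        Tendsto (fun t : ℝ => t * (cTV μ (Ico 0 (1 - t))).toReal)
          (nhdsWithin 0 (Ioi 0)) (nhds 0))) := by
  have hbc : IsCompact (closure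
      (⇑(toWeakSpace ℂ Volterra) '' (⇑D '' Metric.closedBall 0 1))) →
      ((∀ E : Set ℝ, MeasurableSet E → volume E = 0 → μ E = 0) ∧
        Tendsto (fun t : ℝ => t * (cTV μ (Ico 0 (1 - t))).toReal)
          (nhdsWithin 0 (Ioi 0)) (nhds 0)) :=
    fun hK => ⟨fun A hA hAn => aux_ac_all hμc hD hK A hA hAn, aux_tend μ⟩
  exact ⟨⟨fun h => hbc (aux_weak h), fun h => aux_compact hμc hD h.1⟩,
    ⟨hbc, fun h => aux_weak (aux_compact hμc hD h.1)⟩⟩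
end
end
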